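/- arXiv:1306.1994 — 9 statements merged into one kernel-verified Lean document; each statement's English description precedes it below -/
import Mathlib

section
/- Let F be a field, A a commutative associative F-algebra, and ω : A → A an involution. Then the bilinear bracket [a,b]_ω := ω(a)b − ω(b)a is skew-symmetric ([a,b]_ω = −[b,a]_ω) and satisfies the Jacobi identity [[a,b]_ω, c]_ω + [[b,c]_ω, a]_ω + [[c,a]_ω, b]_ω = 0 for all a, b, c ∈ A; hence [·,·]_ω makes A a Lie algebra. -/
/-!
An involution `ω` negates every bracket, `ω [a, b] = -[a, b]`, so that
`[[a, b], c] = -(c + ω c) [a, b]`. The Jacobi identity therefore splits into the two cyclic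
identities `∑ c [a, b] = 0` and `∑ ω(c) [a, b] = 0`. These hold for every map `ω`: they are the
expansions of `3 × 3` determinants with two equal rows, the rows being `(a, b, c)` and
`(ω a, ω b, ω c)`.
-/

/-- The bracket `[a, b]_ω = ω(a)b - ω(b)a` obtained by twisting the multiplication by `ω`. It is
defined for an arbitrary map `ω`, and is a Lie bracket when `ω` is an involution of a commutative
ring. -/
def twistedBracket {A : Type*} [NonUnitalNonAssocRing A] (ω : A → A) (a b : A) : A :=
  ω a * b - ω b * a

namespace twistedBracket

theorem eq_neg_swap {A : Type*} [NonUnitalNonAssocRing A] (ω : A → A) (a b : A) :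
    twistedBracket ω a b = -twistedBracket ω b a :=
  (neg_sub _ _).symm

variable {A : Type*} [NonUnitalCommRing A]

theorem mul_cyclic_sum_eq_zero (ω : A → A) (a b c : A) :
    c * twistedBracket ω a b + a * twistedBracket ω b c + b * twistedBracket ω c a = 0 := by
  simp only [twistedBracket, mul_sub, mul_comm, mul_left_comm]
  abel

theorem map_mul_cyclic_sum_eq_zero (ω : A → A) (a b c : A) :
    ω c * twistedBracket ω a b + ω a * twistedBracket ω b c + ω b * twistedBracket ω c a = 0 := by
  simp only [twistedBracket, mul_sub, mul_comm, mul_left_comm]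
  abel

variable {ω : A →ₙ+* A}

theorem map_eq_neg (hω : Function.Involutive ω) (a b : A) :
    ω (twistedBracket ω a b) = -twistedBracket ω a b :=
  calc
    ω (twistedBracket ω a b) = a * ω b - b * ω a := by
      simp only [twistedBracket, map_sub, map_mul, hω a, hω b]
    _ = -twistedBracket ω a b := by
      rw [twistedBracket, neg_sub, mul_comm a, mul_comm b]

theorem left_nested_eq (hω : Function.Involutive ω) (a b c : A) :
    twistedBracket ω (twistedBracket ω a b) c = -((c + ω c) * twistedBracket ω a b) :=
  calc
    twistedBracket ω (twistedBracket ω a b) c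
        = ω (twistedBracket ω a b) * c - ω c * twistedBracket ω a b := rfl
    _ = -((c + ω c) * twistedBracket ω a b) := by
      rw [map_eq_neg hω, neg_mul, mul_comm _ c, add_mul, neg_add']

theorem jacobi (hω : Function.Involutive ω) (a b c : A) :
    twistedBracket ω (twistedBracket ω a b) c + twistedBracket ω (twistedBracket ω b c) a +
      twistedBracket ω (twistedBracket ω c a) b = 0 :=
  calc
    _ = -(c * twistedBracket ω a b + a * twistedBracket ω b c + b * twistedBracket ω c a) -
          (ω c * twistedBracket ω a b + ω a * twistedBracket ω b c +
            ω b * twistedBracket ω c a) := by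
      simp only [left_nested_eq hω, add_mul]
      abel
    _ = 0 := by
      rw [mul_cyclic_sum_eq_zero, map_mul_cyclic_sum_eq_zero, neg_zero, sub_zero]

end twistedBracket

theorem stmt_0_general {A : Type*} [NonUnitalCommRing A] (ω : A →ₙ+* A)
    (hω : Function.Involutive ω) :
    (∀ a b : A, twistedBracket ω a b = -twistedBracket ω b a) ∧
    (∀ a b c : A,
      twistedBracket ω (twistedBracket ω a b) c + twistedBracket ω (twistedBracket ω b c) a +
        twistedBracket ω (twistedBracket ω c a) b = 0) :=
  ⟨twistedBracket.eq_neg_swap ω, twistedBracket.jacobi hω⟩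

/-- For a commutative associative `F`-algebra `A` with involution `ω`,
the bracket `[a,b]_ω = ω(a)b − ω(b)a` is skew-symmetric and satisfies the Jacobi identity. -/
theorem stmt_0 (F : Type*) [Field F] (A : Type*) [CommRing A] [Algebra F A]
    (ω : A →ₗ[F] A) (hωmul : ∀ a b : A, ω (a * b) = ω a * ω b)
    (hωinv : ∀ a : A, ω (ω a) = a)
    (br : A → A → A) (hbr : ∀ a b : A, br a b = ω a * b - ω b * a) :
    (∀ a b : A, br a b = - br b a) ∧
    (∀ a b c : A, br (br a b) c + br (br b c) a + br (br c a) b = 0) := by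
  obtain rfl : br = twistedBracket ω := funext₂ hbr
  exact stmt_0_general { ω.toAddMonoidHom with map_mul' := hωmul } hωinv
end

section
/- Let F be a field, A a commutative associative F-algebra, ω : A → A an involution, and Δ : A → A a derivation such that ω∘Δ + Δ∘ω = 0. Then the bilinear bracket [a,b]_{ω,Δ} := (a − ω(a))Δ(b) − (b − ω(b))Δ(a) is skew-symmetric and satisfies the Jacobi identity [[a,b]_{ω,Δ}, c]_{ω,Δ} + [[b,c]_{ω,Δ}, a]_{ω,Δ} + [[c,a]_{ω,Δ}, b]_{ω,Δ} = 0 for all a, b, c ∈ A; hence [·,·]_{ω,Δ} makes A a Lie algebra. -/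
/-!
Write `σ a = a - ω a`, so that the bracket is `σ a * Δ b - σ b * Δ a`. Since `ω` negates the values
of `σ` and anticommutes with `Δ`, the map `σ` carries this bracket to the Witt bracket
`x * Δ y - y * Δ x`. This intertwining already forces the Jacobi identity: it turns the outer
`σ [a, b]` into `σ a * Δ (σ b) - σ b * Δ (σ a)`, after which the cyclic sum cancels term by term.
-/

/-- The bracket `[a, b] = σ a * Δ b - σ b * Δ a` attached to a map `σ` and a derivation `Δ`. The
paper's `[a, b]_{ω,Δ}` is the case `σ a = a - ω a`, the Witt bracket is the case `σ = id`. -/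
def derivationBracket {A : Type*} [Mul A] [Sub A] (σ Δ : A → A) (a b : A) : A :=
  σ a * Δ b - σ b * Δ a

namespace derivationBracket

section NonUnitalNonAssocRing

variable {A : Type*} [NonUnitalNonAssocRing A]

theorem skew (σ Δ : A → A) (a b : A) :
    derivationBracket σ Δ a b = -derivationBracket σ Δ b a :=
  (neg_sub _ _).symm

theorem sub_involution_map_eq_witt (ω : A →ₙ+* A) (hω : Function.Involutive ω) (Δ : A →+ A)
    (hanti : ∀ a, ω (Δ a) + Δ (ω a) = 0) (a b : A) :
    derivationBracket (fun x ↦ x - ω x) Δ a b - ω (derivationBracket (fun x ↦ x - ω x) Δ a b) =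
      derivationBracket id Δ (a - ω a) (b - ω b) := by
  have ω_sub (x : A) : ω (x - ω x) = -(x - ω x) := by rw [map_sub, hω x, neg_sub]
  have ω_Δ (x : A) : ω (Δ x) = -Δ (ω x) := eq_neg_of_add_eq_zero_left (hanti x)
  have ω_bracket : ω (derivationBracket (fun x ↦ x - ω x) Δ a b) =
      (a - ω a) * Δ (ω b) - (b - ω b) * Δ (ω a) := by
    simp only [derivationBracket, map_sub ω (_ * _), map_mul, ω_sub, ω_Δ, neg_mul_neg]
  rw [ω_bracket]
  simp only [derivationBracket, id, map_sub Δ, mul_sub]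
  abel

end NonUnitalNonAssocRing

section NonUnitalCommRing

variable {A : Type*} [NonUnitalCommRing A]

theorem jacobi_of_map_eq_witt (σ : A → A) (Δ : A →+ A)
    (hΔ : ∀ a b, Δ (a * b) = Δ a * b + a * Δ b)
    (hσ : ∀ a b, σ (derivationBracket σ Δ a b) = derivationBracket id Δ (σ a) (σ b))
    (a b c : A) :
    derivationBracket σ Δ (derivationBracket σ Δ a b) c +
      derivationBracket σ Δ (derivationBracket σ Δ b c) a +
      derivationBracket σ Δ (derivationBracket σ Δ c a) b = 0 := by
  have Δ_bracket (x y : A) : Δ (derivationBracket σ Δ x y) =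
      Δ (σ x) * Δ y + σ x * Δ (Δ y) - (Δ (σ y) * Δ x + σ y * Δ (Δ x)) := by
    rw [derivationBracket, map_sub, hΔ, hΔ]
  have double_bracket (x y z : A) : derivationBracket σ Δ (derivationBracket σ Δ x y) z =
      (σ x * Δ (σ y) - σ y * Δ (σ x)) * Δ z -
        σ z * (Δ (σ x) * Δ y + σ x * Δ (Δ y) - (Δ (σ y) * Δ x + σ y * Δ (Δ x))) := by
    rw [derivationBracket, hσ, Δ_bracket, derivationBracket, id, id]
  simp only [double_bracket, mul_add, mul_sub, mul_left_comm, mul_comm]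
  abel

end NonUnitalCommRing

end derivationBracket

theorem stmt_1_general {A : Type*} [NonUnitalCommRing A]
    (ω : A →ₙ+* A) (hω : Function.Involutive ω)
    (Δ : A →+ A) (hΔ : ∀ a b, Δ (a * b) = Δ a * b + a * Δ b)
    (hanti : ∀ a, ω (Δ a) + Δ (ω a) = 0)
    (br : A → A → A) (hbr : ∀ a b, br a b = (a - ω a) * Δ b - (b - ω b) * Δ a) :
    (∀ a b, br a b = -br b a) ∧
    (∀ a b c, br (br a b) c + br (br b c) a + br (br c a) b = 0) := by
  obtain rfl : br = derivationBracket (fun x ↦ x - ω x) Δ := funext₂ hbr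
  exact ⟨derivationBracket.skew _ Δ, derivationBracket.jacobi_of_map_eq_witt _ Δ hΔ
    (derivationBracket.sub_involution_map_eq_witt ω hω Δ hanti)⟩

/-- For a commutative associative `F`-algebra `A` with involution `ω` and
derivation `Δ` satisfying `ω∘Δ + Δ∘ω = 0`, the bracket
`[a,b]_{ω,Δ} = (a − ω(a))Δ(b) − (b − ω(b))Δ(a)` is skew-symmetric and satisfies the
Jacobi identity. -/
theorem stmt_1 (F : Type*) [Field F] (A : Type*) [CommRing A] [Algebra F A]
    (ω : A →ₗ[F] A) (hωmul : ∀ a b : A, ω (a * b) = ω a * ω b)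
    (hωinv : ∀ a : A, ω (ω a) = a)
    (Δ : A →ₗ[F] A) (hΔ : ∀ a b : A, Δ (a * b) = Δ a * b + a * Δ b)
    (hanti : ∀ a : A, ω (Δ a) + Δ (ω a) = 0)
    (br : A → A → A)
    (hbr : ∀ a b : A, br a b = (a - ω a) * Δ b - (b - ω b) * Δ a) :
    (∀ a b : A, br a b = - br b a) ∧
    (∀ a b c : A, br (br a b) c + br (br b c) a + br (br c a) b = 0) := by
  exact stmt_1_general ⟨⟨ω, hωmul⟩, map_zero ω, map_add ω⟩ hωinv Δ.toAddMonoidHom hΔ hanti br hbr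
end

section
/- Let F be a field with char F ≠ 2, A a commutative associative F-algebra, Δ : A → A a derivation, and β : A → F an F-linear functional such that β(aΔ(b) − bΔ(a)) = 0 for all a, b ∈ A. Then the trilinear bracket [a,b,c]_{β,Δ} := β(a)(bΔ(c) − cΔ(b)) + β(b)(cΔ(a) − aΔ(c)) + β(c)(aΔ(b) − bΔ(a)) is skew-symmetric and satisfies the fundamental identity; hence (A, [·,·,·]_{β,Δ}) is a 3-Lie algebra. -/
/-!
For a derivation `D`, the Wronskian `a * D b - b * D a` is a Lie bracket on `A`, and the condition
on `β` says exactly that `β` vanishes on all brackets. Let `χ` be a functional with this property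
on any Lie algebra. Then `[·, y, z]` is the sum of `χ(·) u` and `⁅·, w⁆`, where `u = ⁅y, z⁆` and
`w = χ(z) y - χ(y) z`, and the fundamental identity says that it is a derivation of the ternary
bracket. Both summands are: `⁅·, w⁆` by the Jacobi identity, and `χ(·) u` because `χ u = 0` and the
terms of the Leibniz rule cancel in pairs.
-/

section TernaryBracket

variable {R L : Type*} [CommRing R] [LieRing L] [LieAlgebra R L] (χ : L →ₗ[R] R)

/-- The ternary bracket induced on a Lie algebra by a linear functional `χ`, as a trilinear map. Its
cyclic formula is `ternaryBracket_apply`; it is a 3-Lie bracket when `χ` vanishes on all Lie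
brackets. -/
def ternaryBracket : L →ₗ[R] L →ₗ[R] L →ₗ[R] L :=
  let ad : L →ₗ[R] L →ₗ[R] L := LieAlgebra.ad R L
  χ.smulRight ad - (χ.smulRight ad).flip + ad.compr₂ (LinearMap.smulRightₗ χ)

theorem ternaryBracket_apply (x y z : L) :
    ternaryBracket χ x y z = χ x • ⁅y, z⁆ + χ y • ⁅z, x⁆ + χ z • ⁅x, y⁆ := by
  rw [← lie_skew z x, smul_neg, ← sub_eq_add_neg]
  rfl

theorem ternaryBracket_swap_left (x y z : L) :
    ternaryBracket χ y x z = -ternaryBracket χ x y z := by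
  rw [ternaryBracket_apply, ternaryBracket_apply, ← lie_skew x z, ← lie_skew z y, ← lie_skew y x]
  module

theorem ternaryBracket_swap_right (x y z : L) :
    ternaryBracket χ x z y = -ternaryBracket χ x y z := by
  rw [ternaryBracket_apply, ternaryBracket_apply, ← lie_skew z y, ← lie_skew y x, ← lie_skew x z]
  module

theorem ternaryBracket_swap_outer (x y z : L) :
    ternaryBracket χ z y x = -ternaryBracket χ x y z := by
  rw [ternaryBracket_swap_left, ternaryBracket_swap_right, ternaryBracket_swap_left, neg_neg]

theorem ternaryBracket_eq_smul_add_lie (x y z : L) :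
    ternaryBracket χ x y z = χ x • ⁅y, z⁆ + ⁅x, χ z • y - χ y • z⁆ := by
  rw [ternaryBracket_apply, lie_sub, lie_smul, lie_smul, ← lie_skew z x]
  module

variable {χ}

theorem map_ternaryBracket_eq_zero (hχ : ∀ x y : L, χ ⁅x, y⁆ = 0) (x y z : L) :
    χ (ternaryBracket χ x y z) = 0 := by
  simp [ternaryBracket_apply, hχ]

theorem ternaryBracket_lie (hχ : ∀ x y : L, χ ⁅x, y⁆ = 0) (x₁ x₂ x₃ w : L) :
    ⁅ternaryBracket χ x₁ x₂ x₃, w⁆ =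
      ternaryBracket χ ⁅x₁, w⁆ x₂ x₃ + ternaryBracket χ x₁ ⁅x₂, w⁆ x₃ +
        ternaryBracket χ x₁ x₂ ⁅x₃, w⁆ := by
  have leibniz (x y : L) : ⁅⁅x, y⁆, w⁆ = ⁅⁅x, w⁆, y⁆ + ⁅x, ⁅y, w⁆⁆ := by
    rw [leibniz_lie x y w, ← lie_skew y ⁅x, w⁆]
    abel
  simp only [ternaryBracket_apply, hχ, add_lie, smul_lie, leibniz]
  module

theorem ternaryBracket_smul_leibniz_eq_zero {u : L} (hu : χ u = 0) (x₁ x₂ x₃ : L) :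
    ternaryBracket χ (χ x₁ • u) x₂ x₃ + ternaryBracket χ x₁ (χ x₂ • u) x₃ +
      ternaryBracket χ x₁ x₂ (χ x₃ • u) = 0 := by
  simp only [map_smul, LinearMap.smul_apply, ternaryBracket_apply, hu]
  rw [← lie_skew u x₁, ← lie_skew u x₂, ← lie_skew u x₃]
  module

theorem ternaryBracket_fundamental_identity (hχ : ∀ x y : L, χ ⁅x, y⁆ = 0) (x₁ x₂ x₃ y z : L) :
    ternaryBracket χ (ternaryBracket χ x₁ x₂ x₃) y z =
      ternaryBracket χ (ternaryBracket χ x₁ y z) x₂ x₃ +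
        ternaryBracket χ x₁ (ternaryBracket χ x₂ y z) x₃ +
          ternaryBracket χ x₁ x₂ (ternaryBracket χ x₃ y z) := by
  set u := ⁅y, z⁆
  set w := χ z • y - χ y • z
  have split (x : L) : ternaryBracket χ x y z = χ x • u + ⁅x, w⁆ :=
    ternaryBracket_eq_smul_add_lie χ x y z
  calc ternaryBracket χ (ternaryBracket χ x₁ x₂ x₃) y z
      = ⁅ternaryBracket χ x₁ x₂ x₃, w⁆ := by
        rw [split, map_ternaryBracket_eq_zero hχ, zero_smul, zero_add]
    _ = (ternaryBracket χ (χ x₁ • u) x₂ x₃ + ternaryBracket χ x₁ (χ x₂ • u) x₃ +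
          ternaryBracket χ x₁ x₂ (χ x₃ • u)) +
        (ternaryBracket χ ⁅x₁, w⁆ x₂ x₃ + ternaryBracket χ x₁ ⁅x₂, w⁆ x₃ +
          ternaryBracket χ x₁ x₂ ⁅x₃, w⁆) := by
        rw [ternaryBracket_smul_leibniz_eq_zero (hχ y z), zero_add, ternaryBracket_lie hχ]
    _ = _ := by
        simp only [split, map_add, LinearMap.add_apply]
        abel

end TernaryBracket

section Wronskian

variable {R A : Type*} [CommRing R] [CommRing A] [Algebra R A] (D : Derivation R A A)

/-- The Wronskian `a * D b - b * D a` of two elements with respect to a derivation `D`, as a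
bilinear map. -/
def derivationWronskian : A →ₗ[R] A →ₗ[R] A :=
  (LinearMap.mul R A).compl₂ (D : A →ₗ[R] A) - ((LinearMap.mul R A).compl₂ (D : A →ₗ[R] A)).flip

theorem derivationWronskian_apply (a b : A) : derivationWronskian D a b = a * D b - b * D a := rfl

theorem map_derivationWronskian (a b : A) :
    D (derivationWronskian D a b) = a * D (D b) - b * D (D a) := by
  simp only [derivationWronskian_apply, map_sub, Derivation.leibniz, smul_eq_mul]
  ring

theorem derivationWronskian_jacobi (a b c : A) :
    derivationWronskian D a (derivationWronskian D b c) =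
      derivationWronskian D (derivationWronskian D a b) c +
        derivationWronskian D b (derivationWronskian D a c) := by
  rw [derivationWronskian_apply D a (derivationWronskian D b c),
    derivationWronskian_apply D (derivationWronskian D a b) c,
    derivationWronskian_apply D b (derivationWronskian D a c)]
  simp only [map_derivationWronskian]
  simp only [derivationWronskian_apply]
  ring

/-- A copy of `A` carrying the Lie algebra structure whose bracket is the Wronskian with respect
to `D`, kept apart from the commutator bracket of `A`. -/
def WronskianLie (_ : Derivation R A A) : Type _ := A

namespace WronskianLie

instance : AddCommGroup (WronskianLie D) := inferInstanceAs (AddCommGroup A)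

instance : Module R (WronskianLie D) := inferInstanceAs (Module R A)

instance : LieRing (WronskianLie D) where
  bracket := fun a b : A => derivationWronskian D a b
  add_lie := (derivationWronskian D).map_add₂
  lie_add := fun a : A => map_add (derivationWronskian D a)
  lie_self := fun a : A => sub_self (a * D a)
  leibniz_lie := derivationWronskian_jacobi D

instance : LieAlgebra R (WronskianLie D) where
  lie_smul r := fun a : A => map_smul (derivationWronskian D a) r

end WronskianLie

end Wronskian

theorem stmt_3_general {R A : Type*} [CommRing R] [CommRing A] [Algebra R A]
    (D : Derivation R A A) (β : A →ₗ[R] R) (hβ : ∀ a b : A, β (a * D b - b * D a) = 0)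
    (br : A → A → A → A)
    (hbr : ∀ a b c : A, br a b c =
      β a • (b * D c - c * D b) + β b • (c * D a - a * D c) + β c • (a * D b - b * D a)) :
    ((∀ a b c : A, br b a c = - br a b c) ∧
     (∀ a b c : A, br a c b = - br a b c) ∧
     (∀ a b c : A, br c b a = - br a b c)) ∧
    (∀ x₁ x₂ x₃ y z : A,
      br (br x₁ x₂ x₃) y z =
        br (br x₁ y z) x₂ x₃ + br x₁ (br x₂ y z) x₃ + br x₁ x₂ (br x₃ y z)) := by
  let χ : WronskianLie D →ₗ[R] R := β
  have hχ : ∀ x y : WronskianLie D, χ ⁅x, y⁆ = 0 := hβ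
  obtain rfl : br = fun a b c => ternaryBracket χ a b c := by
    funext a b c
    exact (hbr a b c).trans (ternaryBracket_apply χ a b c).symm
  exact ⟨⟨ternaryBracket_swap_left χ, ternaryBracket_swap_right χ, ternaryBracket_swap_outer χ⟩,
    ternaryBracket_fundamental_identity (L := WronskianLie D) hχ⟩

/-- char F ≠ 2, `Δ` a derivation of `A`, `β` a linear functional killing
`aΔ(b) − bΔ(a)`. The trilinear bracket `[a,b,c]_{β,Δ}` is skew-symmetric and satisfies
the fundamental identity, making `A` a 3-Lie algebra. -/
theorem stmt_3 (F : Type*) [Field F] (h2 : (2 : F) ≠ 0)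
    (A : Type*) [CommRing A] [Algebra F A]
    (Δ : A →ₗ[F] A) (hΔ : ∀ a b : A, Δ (a * b) = Δ a * b + a * Δ b)
    (β : A →ₗ[F] F) (hβ : ∀ a b : A, β (a * Δ b - b * Δ a) = 0)
    (br : A → A → A → A)
    (hbr : ∀ a b c : A, br a b c =
      β a • (b * Δ c - c * Δ b) + β b • (c * Δ a - a * Δ c) + β c • (a * Δ b - b * Δ a)) :
    ((∀ a b c : A, br b a c = - br a b c) ∧
     (∀ a b c : A, br a c b = - br a b c) ∧
     (∀ a b c : A, br c b a = - br a b c)) ∧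
    (∀ x₁ x₂ x₃ y z : A,
      br (br x₁ x₂ x₃) y z =
        br (br x₁ y z) x₂ x₃ + br x₁ (br x₂ y z) x₃ + br x₁ x₂ (br x₃ y z)) := by
  have leibniz (a b : A) : Δ (a * b) = a • Δ b + b • Δ a := by
    rw [hΔ, smul_eq_mul, smul_eq_mul, mul_comm b, add_comm]
  exact stmt_3_general (Derivation.mk' Δ leibniz) β hβ br hbr
end

section
/- Let F be a field with char F ≠ 2, A a commutative associative F-algebra, ω : A → A an involution, Δ : A → A a derivation with ω∘Δ + Δ∘ω = 0, and γ : A → F an F-linear functional such that γ(aΔ(b) − bΔ(a)) = γ(ω(a)Δ(b) − ω(b)Δ(a)) for all a, b ∈ A. Then the trilinear bracket [a,b,c]_{γ,ω,Δ} := γ(a)((b−ω(b))Δ(c) − (c−ω(c))Δ(b)) + γ(b)((c−ω(c))Δ(a) − (a−ω(a))Δ(c)) + γ(c)((a−ω(a))Δ(b) − (b−ω(b))Δ(a)) is skew-symmetric and satisfies the fundamental identity; hence (A, [·,·,·]_{γ,ω,Δ}) is a 3-Lie algebra. -/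
/-!
The binary bracket `⁅a, b⁆ = (a - ω a) * Δ b - (b - ω b) * Δ a` is a Lie bracket: since `Δ`
anticommutes with the involution `ω`, the map `s = id - ω` satisfies
`s (s a * Δ b) = s a * Δ (s b)`, so that `s ⁅a, b⁆ * Δ` is the commutator of the derivations
`s a * Δ` and `s b * Δ`. The condition on `γ` says that `γ` vanishes on all `⁅a, b⁆`.

For any functional `f` on a Lie algebra that vanishes on commutators, the ternary bracket
`f x • ⁅y, z⁆ + f y • ⁅z, x⁆ + f z • ⁅x, y⁆` satisfies the fundamental identity: bracketing with
`y` and `z` is `ad (f y • z - f z • y)` plus the map `w ↦ f w • ⁅y, z⁆`. The first is a derivation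
of the ternary bracket because `f` kills its image, and the contributions of the second cancel.
-/

section TraceBracket

variable {R L : Type*} [CommRing R] [LieRing L] [LieAlgebra R L] (f : L →ₗ[R] R)

/-- The ternary bracket induced on a Lie algebra by a linear functional `f`. It is meant for
functionals vanishing on commutators, for which it satisfies the fundamental identity. -/
def traceBracket (x y z : L) : L :=
  f x • ⁅y, z⁆ + f y • ⁅z, x⁆ + f z • ⁅x, y⁆

theorem traceBracket_rotate (x y z : L) : traceBracket f y z x = traceBracket f x y z := by
  unfold traceBracket
  abel

theorem traceBracket_swap_left (x y z : L) : traceBracket f y x z = -traceBracket f x y z := by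
  unfold traceBracket
  rw [← lie_skew x z, ← lie_skew z y, ← lie_skew y x]
  module

theorem traceBracket_swap_right (x y z : L) : traceBracket f x z y = -traceBracket f x y z := by
  rw [← traceBracket_rotate f x z y, traceBracket_swap_left, traceBracket_rotate,
    traceBracket_rotate]

theorem traceBracket_swap_outer (x y z : L) : traceBracket f z y x = -traceBracket f x y z := by
  rw [traceBracket_swap_left, traceBracket_rotate, traceBracket_rotate]

theorem traceBracket_add_left (x x' y z : L) :
    traceBracket f (x + x') y z = traceBracket f x y z + traceBracket f x' y z := by
  simp only [traceBracket, map_add, add_lie, lie_add]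
  module

theorem traceBracket_add_middle (x y y' z : L) :
    traceBracket f x (y + y') z = traceBracket f x y z + traceBracket f x y' z := by
  simp only [← traceBracket_rotate f x, traceBracket_add_left]

theorem traceBracket_add_right (x y z z' : L) :
    traceBracket f x y (z + z') = traceBracket f x y z + traceBracket f x y z' := by
  simp only [traceBracket_rotate f _ x y, traceBracket_add_left]

theorem traceBracket_eq_lie_add_smul (w y z : L) :
    traceBracket f w y z = ⁅f y • z - f z • y, w⁆ + f w • ⁅y, z⁆ := by
  simp only [traceBracket, sub_lie, smul_lie, ← lie_skew w y]
  module

variable {f}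

theorem map_traceBracket_eq_zero (hf : ∀ x y : L, f ⁅x, y⁆ = 0) (x y z : L) :
    f (traceBracket f x y z) = 0 := by
  simp only [traceBracket, map_add, map_smul, hf, smul_zero, add_zero]

theorem lie_traceBracket (hf : ∀ x y : L, f ⁅x, y⁆ = 0) (u x y z : L) :
    ⁅u, traceBracket f x y z⁆ =
      traceBracket f ⁅u, x⁆ y z + traceBracket f x ⁅u, y⁆ z + traceBracket f x y ⁅u, z⁆ := by
  simp only [traceBracket, lie_add, lie_smul, leibniz_lie u, hf, smul_add, zero_smul]
  abel

theorem traceBracket_smul_cyclic_sum_eq_zero {v : L} (hv : f v = 0) (x y z : L) :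
    traceBracket f (f x • v) y z + traceBracket f x (f y • v) z +
      traceBracket f x y (f z • v) = 0 := by
  simp only [traceBracket, map_smul, hv, smul_zero, zero_smul, smul_lie, lie_smul,
    ← lie_skew v]
  module

theorem traceBracket_fundamental_identity (hf : ∀ x y : L, f ⁅x, y⁆ = 0) (x₁ x₂ x₃ y z : L) :
    traceBracket f (traceBracket f x₁ x₂ x₃) y z =
      traceBracket f (traceBracket f x₁ y z) x₂ x₃ +
        traceBracket f x₁ (traceBracket f x₂ y z) x₃ +
        traceBracket f x₁ x₂ (traceBracket f x₃ y z) := by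
  let u := f y • z - f z • y
  have ad_add (w : L) : traceBracket f w y z = ⁅u, w⁆ + f w • ⁅y, z⁆ :=
    traceBracket_eq_lie_add_smul f w y z
  have cancel := traceBracket_smul_cyclic_sum_eq_zero (hf y z) x₁ x₂ x₃
  calc traceBracket f (traceBracket f x₁ x₂ x₃) y z
      = ⁅u, traceBracket f x₁ x₂ x₃⁆ := by
        rw [ad_add, map_traceBracket_eq_zero hf, zero_smul, add_zero]
    _ = traceBracket f ⁅u, x₁⁆ x₂ x₃ + traceBracket f x₁ ⁅u, x₂⁆ x₃ +
          traceBracket f x₁ x₂ ⁅u, x₃⁆ + 0 := by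
        rw [lie_traceBracket hf, add_zero]
    _ = _ := by
        rw [← cancel, ad_add x₁, ad_add x₂, ad_add x₃, traceBracket_add_left,
          traceBracket_add_middle, traceBracket_add_right]
        abel

end TraceBracket

section TwistedWronskian

variable {R A : Type*} [CommRing R] [NonUnitalCommRing A] [Module R A]

/-- The Wronskian of `a` and `b` with respect to `Δ`, with the undifferentiated factors twisted
by `s`. -/
def twistedWronskian (s Δ : A →ₗ[R] A) (a b : A) : A :=
  s a * Δ b - s b * Δ a

variable {s Δ : A →ₗ[R] A}

theorem map_twistedWronskian (hs : ∀ a b, s (s a * Δ b) = s a * Δ (s b)) (a b : A) :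
    s (twistedWronskian s Δ a b) = s a * Δ (s b) - s b * Δ (s a) := by
  rw [twistedWronskian, map_sub, hs, hs]

theorem twistedWronskian_leibniz (hΔ : ∀ a b, Δ (a * b) = Δ a * b + a * Δ b)
    (hs : ∀ a b, s (s a * Δ b) = s a * Δ (s b)) (a b c : A) :
    twistedWronskian s Δ a (twistedWronskian s Δ b c) =
      twistedWronskian s Δ (twistedWronskian s Δ a b) c +
        twistedWronskian s Δ b (twistedWronskian s Δ a c) := by
  have expand (x y z : A) : twistedWronskian s Δ x (twistedWronskian s Δ y z) =
      s x * (Δ (s y) * Δ z + s y * Δ (Δ z) - (Δ (s z) * Δ y + s z * Δ (Δ y))) -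
        (s y * Δ (s z) - s z * Δ (s y)) * Δ x := by
    rw [twistedWronskian, map_twistedWronskian hs, twistedWronskian, map_sub, hΔ, hΔ]
  have skew (x y : A) : twistedWronskian s Δ x y = -twistedWronskian s Δ y x :=
    (neg_sub _ _).symm
  rw [skew (twistedWronskian s Δ a b) c, expand, expand, expand]
  simp only [mul_add, mul_sub, mul_comm, mul_left_comm]
  abel

/-- The Lie ring structure on `A` with bracket `twistedWronskian s Δ`, reducible for local use as an
instance. -/
abbrev twistedWronskianLieRing (hΔ : ∀ a b, Δ (a * b) = Δ a * b + a * Δ b)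
    (hs : ∀ a b, s (s a * Δ b) = s a * Δ (s b)) : LieRing A where
  bracket := twistedWronskian s Δ
  add_lie a b c := by
    simp only [twistedWronskian, map_add, add_mul, mul_add]
    abel
  lie_add a b c := by
    simp only [twistedWronskian, map_add, add_mul, mul_add]
    abel
  lie_self a := sub_self _
  leibniz_lie := twistedWronskian_leibniz hΔ hs

/-- The `R`-Lie algebra structure on `A` with bracket `twistedWronskian s Δ`. -/
abbrev twistedWronskianLieAlgebra [IsScalarTower R A A] [SMulCommClass R A A]
    (hΔ : ∀ a b, Δ (a * b) = Δ a * b + a * Δ b)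
    (hs : ∀ a b, s (s a * Δ b) = s a * Δ (s b)) :
    letI := twistedWronskianLieRing hΔ hs
    LieAlgebra R A :=
  letI := twistedWronskianLieRing hΔ hs
  { lie_smul := fun t a b => by
      change twistedWronskian s Δ a (t • b) = t • twistedWronskian s Δ a b
      simp only [twistedWronskian, map_smul, mul_smul_comm, smul_mul_assoc, smul_sub] }

end TwistedWronskian

section Involution

variable {R A : Type*} [CommRing R] [NonUnitalCommRing A] [Module R A] {ω Δ : A →ₗ[R] A}

/-- The map `a ↦ a - ω a`. For an involution `ω` it is twice the projection onto the
`-1`-eigenspace when `2` is invertible. -/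
def skewPart (ω : A →ₗ[R] A) : A →ₗ[R] A :=
  LinearMap.id - ω

theorem skewPart_apply (ω : A →ₗ[R] A) (a : A) : skewPart ω a = a - ω a :=
  rfl

theorem skewPart_skewPart_mul (hωmul : ∀ a b, ω (a * b) = ω a * ω b)
    (hωinv : ∀ a, ω (ω a) = a) (hanti : ∀ a, ω (Δ a) + Δ (ω a) = 0) (a b : A) :
    skewPart ω (skewPart ω a * Δ b) = skewPart ω a * Δ (skewPart ω b) := by
  have hωΔ : ω (Δ b) = -Δ (ω b) := eq_neg_of_add_eq_zero_left (hanti b)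
  have hωskew : ω (a - ω a) = -(a - ω a) := by rw [map_sub, hωinv, neg_sub]
  rw [skewPart_apply, skewPart_apply, skewPart_apply, hωmul, hωΔ, hωskew, neg_mul_neg,
    ← mul_sub, map_sub]

theorem map_twistedWronskian_skewPart_eq_zero {γ : A →ₗ[R] R}
    (hγ : ∀ a b, γ (a * Δ b - b * Δ a) = γ (ω a * Δ b - ω b * Δ a)) (a b : A) :
    γ (twistedWronskian (skewPart ω) Δ a b) = 0 := by
  have split : twistedWronskian (skewPart ω) Δ a b =
      (a * Δ b - b * Δ a) - (ω a * Δ b - ω b * Δ a) := by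
    simp only [twistedWronskian, skewPart_apply, sub_mul]
    abel
  rw [split, map_sub, hγ, sub_self]

end Involution

theorem stmt_4_general {R A : Type*} [CommRing R] [NonUnitalCommRing A] [Module R A]
    [IsScalarTower R A A] [SMulCommClass R A A]
    (ω : A →ₗ[R] A) (hωmul : ∀ a b : A, ω (a * b) = ω a * ω b)
    (hωinv : ∀ a : A, ω (ω a) = a)
    (Δ : A →ₗ[R] A) (hΔ : ∀ a b : A, Δ (a * b) = Δ a * b + a * Δ b)
    (hanti : ∀ a : A, ω (Δ a) + Δ (ω a) = 0)
    (γ : A →ₗ[R] R)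
    (hγ : ∀ a b : A, γ (a * Δ b - b * Δ a) = γ (ω a * Δ b - ω b * Δ a))
    (br : A → A → A → A)
    (hbr : ∀ a b c : A, br a b c =
      γ a • ((b - ω b) * Δ c - (c - ω c) * Δ b) +
      γ b • ((c - ω c) * Δ a - (a - ω a) * Δ c) +
      γ c • ((a - ω a) * Δ b - (b - ω b) * Δ a)) :
    ((∀ a b c : A, br b a c = - br a b c) ∧
     (∀ a b c : A, br a c b = - br a b c) ∧
     (∀ a b c : A, br c b a = - br a b c)) ∧
    (∀ x₁ x₂ x₃ y z : A,
      br (br x₁ x₂ x₃) y z =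
        br (br x₁ y z) x₂ x₃ + br x₁ (br x₂ y z) x₃ + br x₁ x₂ (br x₃ y z)) := by
  have hs := skewPart_skewPart_mul hωmul hωinv hanti
  let _ : LieRing A := twistedWronskianLieRing hΔ hs
  let _ : LieAlgebra R A := twistedWronskianLieAlgebra hΔ hs
  obtain rfl : br = traceBracket γ := funext fun a => funext fun b => funext (hbr a b)
  exact ⟨⟨traceBracket_swap_left γ, traceBracket_swap_right γ, traceBracket_swap_outer γ⟩,
    traceBracket_fundamental_identity (map_twistedWronskian_skewPart_eq_zero hγ)⟩

/-- char F ≠ 2, `ω` involution, `Δ` derivation with `ω∘Δ + Δ∘ω = 0`, and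
`γ` a linear functional with `γ(aΔ(b) − bΔ(a)) = γ(ω(a)Δ(b) − ω(b)Δ(a))`. The trilinear
bracket `[a,b,c]_{γ,ω,Δ}` is skew-symmetric and satisfies the fundamental identity. -/
theorem stmt_4 (F : Type*) [Field F] (h2 : (2 : F) ≠ 0)
    (A : Type*) [CommRing A] [Algebra F A]
    (ω : A →ₗ[F] A) (hωmul : ∀ a b : A, ω (a * b) = ω a * ω b)
    (hωinv : ∀ a : A, ω (ω a) = a)
    (Δ : A →ₗ[F] A) (hΔ : ∀ a b : A, Δ (a * b) = Δ a * b + a * Δ b)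
    (hanti : ∀ a : A, ω (Δ a) + Δ (ω a) = 0)
    (γ : A →ₗ[F] F)
    (hγ : ∀ a b : A, γ (a * Δ b - b * Δ a) = γ (ω a * Δ b - ω b * Δ a))
    (br : A → A → A → A)
    (hbr : ∀ a b c : A, br a b c =
      γ a • ((b - ω b) * Δ c - (c - ω c) * Δ b) +
      γ b • ((c - ω c) * Δ a - (a - ω a) * Δ c) +
      γ c • ((a - ω a) * Δ b - (b - ω b) * Δ a)) :
    ((∀ a b c : A, br b a c = - br a b c) ∧
     (∀ a b c : A, br a c b = - br a b c) ∧
     (∀ a b c : A, br c b a = - br a b c)) ∧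
    (∀ x₁ x₂ x₃ y z : A,
      br (br x₁ x₂ x₃) y z =
        br (br x₁ y z) x₂ x₃ + br x₁ (br x₂ y z) x₃ + br x₁ x₂ (br x₃ y z)) := by
  exact stmt_4_general ω hωmul hωinv Δ hΔ hanti γ hγ br hbr
end

section
/- Let F be a field, (G, +) an additive abelian group, F[G] its group algebra, ω : F[G] → F[G] the F-linear map with ω(e_g) = e_{−g}, and α : G → (F, +) an additive group homomorphism with associated F-linear map α* : F[G] → F[G], α*(e_g) = α(g)·e_g. Define the trilinear bracket [x,y,z]_{ω,α*} := ω(x)(yα*(z) − zα*(y)) + ω(y)(zα*(x) − xα*(z)) + ω(z)(xα*(y) − yα*(x)) on F[G]. Then this bracket is skew-symmetric, satisfies the fundamental identity (so that (F[G], [·,·,·]_{ω,α*}) is a 3-Lie algebra), and on basis elements it is given by [e_g, e_h, e_w]_{ω,α*} = α(w−h)·e_{h+w−g} + α(g−w)·e_{g+w−h} + α(h−g)·e_{g+h−w} for all g, h, w ∈ G. -/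
/-!
The bracket is the determinant with rows `ω`, `id`, `α*` evaluated at `x`, `y`, `z`, so it is
skew-symmetric. Here `ω` is an involutive automorphism and `α*` a derivation with
`α* ω = -ω α*`. For fixed `y` and `z`, expanding along the first column gives
`[x, y, z] = p ω(x) + q x + r α*(x)` with `ω(r) = -r` and `α*(r) = -(q + ω(q))`. For any such
operator `T`, the sum over the columns of the determinants with `T` applied to one column is also
the sum over the rows with `T` applied before one row; the relations on `r` turn the latter into
`T` of the determinant, which is the fundamental identity.
-/

section Alternant

variable {X A : Type*} [CommRing A]

/-- The alternant determinant of three functions `f`, `g`, `h` at three points: rows are indexed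
by the functions and columns by the points. The bracket `[x, y, z]` is the alternant of `ω`, `id`,
`α*` at `x`, `y`, `z`. -/
def alternant (f g h : X → A) (x y z : X) : A :=
  !![f x, f y, f z; g x, g y, g z; h x, h y, h z].det

theorem alternant_eq (f g h : X → A) (x y z : X) :
    alternant f g h x y z =
      f x * (g y * h z - g z * h y) + f y * (g z * h x - g x * h z) +
        f z * (g x * h y - g y * h x) := by
  simp only [alternant, Matrix.det_fin_three, Matrix.of_apply, Matrix.cons_val]
  ring

theorem alternant_swap_left (f g h : X → A) (x y z : X) :
    alternant f g h y x z = -alternant f g h x y z := by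
  simp only [alternant_eq]
  ring

theorem alternant_swap_right (f g h : X → A) (x y z : X) :
    alternant f g h x z y = -alternant f g h x y z := by
  simp only [alternant_eq]
  ring

theorem alternant_swap_outer (f g h : X → A) (x y z : X) :
    alternant f g h z y x = -alternant f g h x y z := by
  rw [alternant_swap_left, alternant_swap_right, alternant_swap_left, neg_neg]

theorem map_alternant {B F : Type*} [CommRing B] [FunLike F A B] [RingHomClass F A B] (φ : F)
    (f g h : X → A) (x y z : X) :
    φ (alternant f g h x y z) = alternant (φ ∘ f) (φ ∘ g) (φ ∘ h) x y z := by
  simp only [alternant_eq, map_add, map_sub, map_mul, Function.comp_apply]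

theorem leibniz_alternant {R : Type*} [CommSemiring R] [Algebra R A] (D : Derivation R A A)
    (f g h : X → A) (x y z : X) :
    D (alternant f g h x y z) =
      alternant (D ∘ f) g h x y z + alternant f (D ∘ g) h x y z +
        alternant f g (D ∘ h) x y z := by
  simp only [alternant_eq, map_add, map_sub, D.leibniz, smul_eq_mul, Function.comp_apply]
  ring

theorem sum_alternant_apply_eq_sum_alternant_comp (f g h : X → A) (T : X → X) (x y z : X) :
    alternant f g h (T x) y z + alternant f g h x (T y) z + alternant f g h x y (T z) =
      alternant (f ∘ T) g h x y z + alternant f (g ∘ T) h x y z +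
        alternant f g (h ∘ T) x y z := by
  simp only [alternant_eq, Function.comp_apply]
  ring

theorem alternant_id_of_eigenvectors {R : Type*} [CommRing R] [Algebra R A] (f D : A → A)
    {x y z : A} {a b c : R} (hx : D x = a • x) (hy : D y = b • y) (hz : D z = c • z) :
    alternant f id D x y z =
      (c - b) • (f x * (y * z)) + (a - c) • (f y * (x * z)) + (b - a) • (f z * (x * y)) := by
  simp only [alternant_eq, id, hx, hy, hz, Algebra.smul_def, map_sub]
  ring

end Alternant

section InvolutionDerivation

variable {R A F : Type*} [CommSemiring R] [CommRing A] [Algebra R A] [FunLike F A A]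
  [RingHomClass F A A] {σ : F} {D : Derivation R A A}

theorem apply_alternant_eq_sum_alternant_apply (hσ : Function.Involutive σ)
    (hD : ∀ x, D (σ x) = -σ (D x))
    {T : A → A} {p q r : A} (hT : ∀ x, T x = p * σ x + q * x + r * D x) (hσr : σ r = -r)
    (hDr : D r = -(q + σ q)) (x y z : A) :
    T (alternant σ id D x y z) =
      alternant σ id D (T x) y z + alternant σ id D x (T y) z + alternant σ id D x y (T z) := by
  have row_σ : alternant (σ ∘ T) id D x y z =
      σ q * alternant σ id D x y z + r * alternant (D ∘ σ) id D x y z := by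
    simp only [alternant_eq, Function.comp_apply, id, hT, hD, hσr, map_add, map_mul, hσ _]
    ring
  have row_id : alternant σ (id ∘ T) D x y z = q * alternant σ id D x y z := by
    simp only [alternant_eq, Function.comp_apply, id, hT]
    ring
  have row_D : alternant σ id (D ∘ T) x y z =
      p * alternant σ id (D ∘ σ) x y z + (q + D r) * alternant σ id D x y z +
        r * alternant σ id (D ∘ D) x y z := by
    simp only [alternant_eq, Function.comp_apply, id, hT, map_add, D.leibniz, smul_eq_mul]
    ring
  have σ_alternant : σ (alternant σ id D x y z) = alternant σ id (D ∘ σ) x y z := by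
    rw [map_alternant]
    simp only [alternant_eq, Function.comp_apply, id, hσ _, hD]
    ring
  have D_alternant : D (alternant σ id D x y z) =
      alternant (D ∘ σ) id D x y z + alternant σ id (D ∘ D) x y z := by
    rw [leibniz_alternant]
    simp only [alternant_eq, Function.comp_apply, id]
    ring
  rw [hT, σ_alternant, D_alternant, sum_alternant_apply_eq_sum_alternant_comp, row_σ, row_id,
    row_D, hDr]
  ring

theorem alternant_fundamental_identity (hσ : Function.Involutive σ)
    (hD : ∀ x, D (σ x) = -σ (D x)) (x₁ x₂ x₃ y z : A) :
    alternant σ id D (alternant σ id D x₁ x₂ x₃) y z =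
      alternant σ id D (alternant σ id D x₁ y z) x₂ x₃ +
        alternant σ id D x₁ (alternant σ id D x₂ y z) x₃ +
        alternant σ id D x₁ x₂ (alternant σ id D x₃ y z) := by
  let p := y * D z - z * D y
  let q := σ z * D y - σ y * D z
  let r := z * σ y - y * σ z
  have expansion (x : A) : alternant σ id D x y z = p * σ x + q * x + r * D x := by
    simp only [alternant_eq, id, p, q, r]
    ring
  have hσr : σ r = -r := by
    simp only [map_sub, map_mul, hσ _, r]
    ring
  have hDr : D r = -(q + σ q) := by
    simp only [map_sub, map_mul, hσ _, D.leibniz, smul_eq_mul, hD, q, r]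
    ring
  exact apply_alternant_eq_sum_alternant_apply hσ hD expansion hσr hDr x₁ x₂ x₃

end InvolutionDerivation

section GroupAlgebra

open AddMonoidAlgebra

section Weight

variable {R M : Type*} [CommSemiring R] [AddCommMonoid M]

/-- The linear map `e_m ↦ α(m) • e_m` of a monoid algebra attached to an additive character `α`;
for a group algebra it is the map `α*`. -/
noncomputable def weightMap (α : M →+ R) : R[M] →ₗ[R] R[M] :=
  (Finsupp.lsum R fun m ↦ α m • lsingle m) ∘ₗ (coeffLinearEquiv R).toLinearMap

theorem weightMap_single (α : M →+ R) (m : M) (r : R) :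
    weightMap α (single m r) = α m • single m r := by
  simp [weightMap]

theorem weightMap_mul (α : M →+ R) (x y : R[M]) :
    weightMap α (x * y) = x * weightMap α y + y * weightMap α x := by
  induction x using AddMonoidAlgebra.induction_linear with
  | zero => simp
  | add x x' hx hx' =>
    simp only [add_mul, mul_add, map_add, hx, hx']
    ring
  | single m r =>
    induction y using AddMonoidAlgebra.induction_linear with
    | zero => simp
    | add y y' hy hy' =>
      simp only [add_mul, mul_add, map_add, hy, hy']
      ring
    | single n s =>
      simp only [single_mul_single, weightMap_single, mul_smul_comm, map_add, add_smul,
        add_comm n m, mul_comm s r]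
      exact add_comm _ _

/-- The map `weightMap α` as a derivation of the monoid algebra. -/
noncomputable def weightDerivation (α : M →+ R) : Derivation R R[M] R[M] where
  toLinearMap := weightMap α
  map_one_eq_zero' := by simp only [one_def, weightMap_single, map_zero, zero_smul]
  leibniz' := weightMap_mul α

theorem weightDerivation_single (α : M →+ R) (m : M) (r : R) :
    weightDerivation α (single m r) = α m • single m r :=
  weightMap_single α m r

end Weight

theorem mapDomainAlgHom_neg_involutive (R A G : Type*) [CommSemiring R] [Semiring A] [Algebra R A]
    [AddCommGroup G] :
    Function.Involutive (mapDomainAlgHom R A (negAddMonoidHom (α := G))) := by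
  intro x
  induction x using AddMonoidAlgebra.induction_linear with
  | zero => simp
  | add x y hx hy => simp only [map_add, hx, hy]
  | single g a => simp

theorem weightDerivation_mapDomainAlgHom_neg {R G : Type*} [CommRing R] [AddCommGroup G]
    (α : G →+ R) (x : R[G]) :
    weightDerivation α (mapDomainAlgHom R R negAddMonoidHom x) =
      -mapDomainAlgHom R R negAddMonoidHom (weightDerivation α x) := by
  induction x using AddMonoidAlgebra.induction_linear with
  | zero => simp
  | add x y hx hy => simp only [map_add, hx, hy, neg_add]
  | single g r => simp [weightDerivation_single]

theorem alternant_weightDerivation_single {R G : Type*} [CommRing R] [AddCommGroup G] (α : G →+ R)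
    (g h w : G) :
    alternant (mapDomainAlgHom R R negAddMonoidHom) id (weightDerivation α)
        (single g (1 : R)) (single h (1 : R)) (single w (1 : R)) =
      α (w - h) • single (h + w - g) (1 : R) + α (g - w) • single (g + w - h) (1 : R) +
        α (h - g) • single (g + h - w) (1 : R) := by
  rw [alternant_id_of_eigenvectors _ _ (weightDerivation_single α g 1)
    (weightDerivation_single α h 1) (weightDerivation_single α w 1)]
  simp only [mapDomainAlgHom_apply, mapDomain_single, single_mul_single, negAddMonoidHom_apply,
    neg_add_eq_sub, mul_one, map_sub]

end GroupAlgebra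

theorem stmt_10_general (F : Type*) [CommRing F] (G : Type*) [AddCommGroup G]
    (ω : AddMonoidAlgebra F G →ₗ[F] AddMonoidAlgebra F G)
    (hω : ∀ g : G, ω (AddMonoidAlgebra.single g (1 : F)) = AddMonoidAlgebra.single (-g) (1 : F))
    (α : G →+ F)
    (αs : AddMonoidAlgebra F G →ₗ[F] AddMonoidAlgebra F G)
    (hαs : ∀ g : G, αs (AddMonoidAlgebra.single g (1 : F)) =
      α g • AddMonoidAlgebra.single g (1 : F))
    (br : AddMonoidAlgebra F G → AddMonoidAlgebra F G → AddMonoidAlgebra F G →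
      AddMonoidAlgebra F G)
    (hbr : ∀ x y z : AddMonoidAlgebra F G, br x y z =
      ω x * (y * αs z - z * αs y) + ω y * (z * αs x - x * αs z) + ω z * (x * αs y - y * αs x)) :
    ((∀ x y z : AddMonoidAlgebra F G, br y x z = - br x y z) ∧
     (∀ x y z : AddMonoidAlgebra F G, br x z y = - br x y z) ∧
     (∀ x y z : AddMonoidAlgebra F G, br z y x = - br x y z)) ∧
    (∀ x₁ x₂ x₃ y z : AddMonoidAlgebra F G,
      br (br x₁ x₂ x₃) y z =
        br (br x₁ y z) x₂ x₃ + br x₁ (br x₂ y z) x₃ + br x₁ x₂ (br x₃ y z)) ∧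
    (∀ g h w : G,
      br (AddMonoidAlgebra.single g (1 : F)) (AddMonoidAlgebra.single h (1 : F))
          (AddMonoidAlgebra.single w (1 : F)) =
        α (w - h) • AddMonoidAlgebra.single (h + w - g) (1 : F) +
        α (g - w) • AddMonoidAlgebra.single (g + w - h) (1 : F) +
        α (h - g) • AddMonoidAlgebra.single (g + h - w) (1 : F)) := by
  let σ := AddMonoidAlgebra.mapDomainAlgHom F F (negAddMonoidHom (α := G))
  have ω_eq : ω = σ.toLinearMap := by
    ext g : 2
    simp [σ, hω]
  have αs_eq : αs = (weightDerivation α).toLinearMap := by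
    ext g : 2
    simp [hαs, weightDerivation_single]
  obtain rfl : br = alternant σ id (weightDerivation α) := by
    funext x y z
    rw [hbr, ω_eq, αs_eq, alternant_eq]
    rfl
  exact ⟨⟨alternant_swap_left _ _ _, alternant_swap_right _ _ _, alternant_swap_outer _ _ _⟩,
    alternant_fundamental_identity (mapDomainAlgHom_neg_involutive F F G)
      (weightDerivation_mapDomainAlgHom_neg α),
    alternant_weightDerivation_single α⟩

/-- On the group algebra `F[G]`, with `ω(e_g) = e_{−g}` and
`α*(e_g) = α(g)·e_g`, the bracket
`[x,y,z]_{ω,α*} = ω(x)(yα*(z) − zα*(y)) + ω(y)(zα*(x) − xα*(z)) + ω(z)(xα*(y) − yα*(x))`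
is skew-symmetric, satisfies the fundamental identity, and on basis elements equals
`α(w−h)·e_{h+w−g} + α(g−w)·e_{g+w−h} + α(h−g)·e_{g+h−w}`. -/
theorem stmt_10 (F : Type*) [Field F] (G : Type*) [AddCommGroup G]
    (ω : AddMonoidAlgebra F G →ₗ[F] AddMonoidAlgebra F G)
    (hω : ∀ g : G, ω (AddMonoidAlgebra.single g (1 : F)) = AddMonoidAlgebra.single (-g) (1 : F))
    (α : G →+ F)
    (αs : AddMonoidAlgebra F G →ₗ[F] AddMonoidAlgebra F G)
    (hαs : ∀ g : G, αs (AddMonoidAlgebra.single g (1 : F)) =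
      α g • AddMonoidAlgebra.single g (1 : F))
    (br : AddMonoidAlgebra F G → AddMonoidAlgebra F G → AddMonoidAlgebra F G →
      AddMonoidAlgebra F G)
    (hbr : ∀ x y z : AddMonoidAlgebra F G, br x y z =
      ω x * (y * αs z - z * αs y) + ω y * (z * αs x - x * αs z) + ω z * (x * αs y - y * αs x)) :
    ((∀ x y z : AddMonoidAlgebra F G, br y x z = - br x y z) ∧
     (∀ x y z : AddMonoidAlgebra F G, br x z y = - br x y z) ∧
     (∀ x y z : AddMonoidAlgebra F G, br z y x = - br x y z)) ∧
    (∀ x₁ x₂ x₃ y z : AddMonoidAlgebra F G,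
      br (br x₁ x₂ x₃) y z =
        br (br x₁ y z) x₂ x₃ + br x₁ (br x₂ y z) x₃ + br x₁ x₂ (br x₃ y z)) ∧
    (∀ g h w : G,
      br (AddMonoidAlgebra.single g (1 : F)) (AddMonoidAlgebra.single h (1 : F))
          (AddMonoidAlgebra.single w (1 : F)) =
        α (w - h) • AddMonoidAlgebra.single (h + w - g) (1 : F) +
        α (g - w) • AddMonoidAlgebra.single (g + w - h) (1 : F) +
        α (h - g) • AddMonoidAlgebra.single (g + h - w) (1 : F)) :=
  stmt_10_general F G ω hω α αs hαs br hbr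
end

section
/- Let F be a field, (G, +) an additive abelian group, F[G] its group algebra, α : G → (F, +) a nonzero additive group homomorphism, and let [·,·,·]_{ω,α*} be the trilinear bracket on F[G] determined by [e_g, e_h, e_w]_{ω,α*} = α(w−h)·e_{h+w−g} + α(g−w)·e_{g+w−h} + α(h−g)·e_{g+h−w}. Let φ_α : F[G] → F be the F-linear functional with φ_α(e_g) = α(g), and set I₀ = ker φ_α. Then: (i) φ_α([x,y,z]_{ω,α*}) = 0 for all x, y, z ∈ F[G], so I₀ is an ideal of the 3-Lie algebra (F[G], [·,·,·]_{ω,α*}) containing its derived algebra; (ii) for any d ∈ G with α(d) ≠ 0, F[G] = F·e_d ⊕ I₀ as F-vector spaces, so I₀ is a maximal ideal and (F[G], [·,·,·]_{ω,α*}) is not a simple 3-Lie algebra. -/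
/-!
Applied to `[e_g, e_h, e_w]`, with `a = α g`, `b = α h`, `c = α w`, the functional `φ_α` gives
`(c - b) (b + c - a) + (a - c) (a + c - b) + (b - a) (a + b - c)`: the differences of squares
telescope and the remaining products cancel, so by trilinearity `φ_α` kills every bracket.
The kernel of the nonzero functional `φ_α` is a hyperplane, hence maximal among all subspaces and
complemented by the line through any vector outside it; it is nonzero because `α 0 = 0` puts `e_0`
in it.
-/

section

open AddMonoidAlgebra

section Trilinear

variable {R G M : Type*} [CommSemiring R] [AddCommMonoid M] [Module R M]

theorem trilinear_eq_zero_of_forall_single_one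
    {T : AddMonoidAlgebra R G →ₗ[R] AddMonoidAlgebra R G →ₗ[R] AddMonoidAlgebra R G →ₗ[R] M}
    (hT : ∀ g h w, T (single g 1) (single h 1) (single w 1) = 0) : T = 0 := by
  ext g h w
  exact hT g h w

end Trilinear

section Bracket

variable {R G : Type*} [CommRing R] [AddGroup G]

theorem apply_bracket_eq_zero {α : G →+ R}
    {f : AddMonoidAlgebra R G →ₗ[R] AddMonoidAlgebra R G →ₗ[R] AddMonoidAlgebra R G →ₗ[R]
      AddMonoidAlgebra R G}
    (hf : ∀ g h w, f (single g 1) (single h 1) (single w 1) =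
      α (w - h) • single (h + w - g) 1 + α (g - w) • single (g + w - h) 1 +
        α (h - g) • single (g + h - w) 1)
    {φ : AddMonoidAlgebra R G →ₗ[R] R} (hφ : ∀ g, φ (single g 1) = α g)
    (x y z : AddMonoidAlgebra R G) : φ (f x y z) = 0 := by
  have vanishes_on_basis (g h w : G) :
      φ (f (single g 1) (single h 1) (single w 1)) = 0 := by
    simp only [hf, map_add, map_smul, hφ, map_sub, smul_eq_mul]
    ring
  have comp_eq_zero : f.compr₂ (φ.compRight R) = 0 :=
    trilinear_eq_zero_of_forall_single_one vanishes_on_basis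
  exact LinearMap.congr_fun (LinearMap.congr_fun₂ comp_eq_zero x y) z

end Bracket

section Hyperplane

variable {K V : Type*} [DivisionRing K] [AddCommGroup V] [Module K V]

theorem isCoatom_ker_of_ne_zero {φ : V →ₗ[K] K} (hφ : φ ≠ 0) : IsCoatom (LinearMap.ker φ) :=
  LinearMap.isCoatom_ker_of_surjective (LinearMap.surjective hφ)

theorem isCompl_span_singleton_ker {φ : V →ₗ[K] K} {v : V} (hv : φ v ≠ 0) :
    IsCompl (K ∙ v) (LinearMap.ker φ) :=
  (Submodule.isCompl_span_singleton_of_isCoatom_of_notMem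
    (isCoatom_ker_of_ne_zero fun h => hv (by rw [h, LinearMap.zero_apply])) hv).symm

end Hyperplane

theorem ker_ne_bot_of_apply_single_eq_zero {R G M : Type*} [Semiring R] [Nontrivial R]
    [AddCommMonoid M] [Module R M] {φ : AddMonoidAlgebra R G →ₗ[R] M} {g : G}
    (hg : φ (single g 1) = 0) : LinearMap.ker φ ≠ ⊥ :=
  (Submodule.ne_bot_iff _).mpr ⟨single g 1, hg, single_ne_zero.mpr one_ne_zero⟩

theorem stmt_11_general {K G : Type*} [Field K] [AddGroup G] {α : G →+ K} (hα : α ≠ 0)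
    {f : AddMonoidAlgebra K G →ₗ[K] AddMonoidAlgebra K G →ₗ[K] AddMonoidAlgebra K G →ₗ[K]
      AddMonoidAlgebra K G}
    (hf : ∀ g h w, f (single g 1) (single h 1) (single w 1) =
      α (w - h) • single (h + w - g) 1 + α (g - w) • single (g + w - h) 1 +
        α (h - g) • single (g + h - w) 1)
    {φ : AddMonoidAlgebra K G →ₗ[K] K} (hφ : ∀ g, φ (single g 1) = α g) :
    (∀ x y z, φ (f x y z) = 0) ∧
    (∀ d, α d ≠ 0 → IsCompl (K ∙ single d (1 : K)) (LinearMap.ker φ)) ∧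
    IsCoatom (LinearMap.ker φ) ∧ LinearMap.ker φ ≠ ⊥ := by
  have φ_ne_zero : φ ≠ 0 := by
    rintro rfl
    exact hα (AddMonoidHom.ext fun g => (hφ g).symm)
  have φ_single_zero : φ (single 0 1) = 0 := by rw [hφ, map_zero]
  exact ⟨apply_bracket_eq_zero hf hφ, fun d hd => isCompl_span_singleton_ker (by rwa [hφ]),
    isCoatom_ker_of_ne_zero φ_ne_zero, ker_ne_bot_of_apply_single_eq_zero φ_single_zero⟩

end

/-- For a nonzero additive homomorphism `α : G → F⁺` and the 3-Lie bracket
on `F[G]` determined by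
`[e_g,e_h,e_w] = α(w−h)·e_{h+w−g} + α(g−w)·e_{g+w−h} + α(h−g)·e_{g+h−w}`,
the kernel `I₀` of the linear functional `φ_α` (with `φ_α(e_g) = α(g)`) is an ideal
containing the derived algebra, `F[G] = F·e_d ⊕ I₀` for any `d` with `α(d) ≠ 0`, `I₀`
is a maximal ideal, and the 3-Lie algebra is not simple. -/
theorem stmt_11 (F : Type*) [Field F] (G : Type*) [AddCommGroup G]
    (α : G →+ F) (hα : α ≠ 0)
    (f : AddMonoidAlgebra F G →ₗ[F] AddMonoidAlgebra F G →ₗ[F] AddMonoidAlgebra F G →ₗ[F]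
      AddMonoidAlgebra F G)
    (hf : ∀ g h w : G,
      f (AddMonoidAlgebra.single g (1 : F)) (AddMonoidAlgebra.single h (1 : F))
          (AddMonoidAlgebra.single w (1 : F)) =
        α (w - h) • AddMonoidAlgebra.single (h + w - g) (1 : F) +
        α (g - w) • AddMonoidAlgebra.single (g + w - h) (1 : F) +
        α (h - g) • AddMonoidAlgebra.single (g + h - w) (1 : F))
    (φ : AddMonoidAlgebra F G →ₗ[F] F)
    (hφ : ∀ g : G, φ (AddMonoidAlgebra.single g (1 : F)) = α g) :
    (∀ x y z : AddMonoidAlgebra F G, φ (f x y z) = 0) ∧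
    (∀ x ∈ LinearMap.ker φ, ∀ y z : AddMonoidAlgebra F G, f x y z ∈ LinearMap.ker φ) ∧
    (∀ d : G, α d ≠ 0 →
      IsCompl (F ∙ (AddMonoidAlgebra.single d (1 : F))) (LinearMap.ker φ)) ∧
    (∀ J : Submodule F (AddMonoidAlgebra F G),
      (∀ x ∈ J, ∀ y z : AddMonoidAlgebra F G, f x y z ∈ J) →
      LinearMap.ker φ ≤ J → J ≠ LinearMap.ker φ → J = ⊤) ∧
    (LinearMap.ker φ ≠ ⊥ ∧ LinearMap.ker φ ≠ ⊤) := by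
  obtain ⟨hker, hcompl, hcoatom, hbot⟩ := stmt_11_general hα hf hφ
  exact ⟨hker, fun x _ y z => hker x y z, hcompl,
    fun J _ hle hne => hcoatom.2 J (hle.lt_of_ne' hne), hbot, hcoatom.1⟩
end

section
/- Let F be a field with char F ≠ 2, A = F[t, t⁻¹] the algebra of Laurent polynomials over F, and for l ∈ ℤ let δ_l = t^l·(d/dt) be the derivation of A given on monomials by δ_l(t^m) = m·t^{m+l−1}. Let ω be an involution of A. Then ω∘δ_l + δ_l∘ω = 0 if and only if either (i) l is even and ω(t^m) = (−1)^m t^m for all m ∈ ℤ, or (ii) l = 1 and there exists λ ∈ F, λ ≠ 0, such that ω(t^m) = λ^m t^{−m} for all m ∈ ℤ. -/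
open LaurentPolynomial

/-!
The units of `R[T;T⁻¹]` over a domain are the `u • T k` with `u` a unit of `R`, so an algebra
endomorphism `ω` is given by `T m ↦ u ^ m • T (k * m)`. It is an involution if and only if
`k ^ 2 = 1` and `u ^ (k + 1) = 1`, and it anticommutes with `δ_l` if and only if
`(k - 1) * (l - 1) = 0` and `u ^ (l - 1) = -k`. For `k = 1` this leaves `u = -1` with `l` even,
and for `k = -1` it leaves `l = 1` with `u` arbitrary.
-/

theorem neg_one_zpow_eq_neg_one_iff_odd {G : Type*} [DivisionMonoid G] [HasDistribNeg G]
    (h : (-1 : G) ≠ 1) {n : ℤ} : (-1 : G) ^ n = -1 ↔ Odd n := by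
  refine ⟨fun hn ↦ Int.not_even_iff_odd.mp fun heven ↦ h ?_, Odd.neg_one_zpow⟩
  rw [← hn, heven.neg_one_zpow]

section Monomials

variable {R : Type*}

theorem smul_T_eq_smul_T_iff [Semiring R] {a b : R} (ha : a ≠ 0) {m n : ℤ} :
    a • (T m : R[T;T⁻¹]) = b • T n ↔ m = n ∧ a = b := by
  simp only [T, AddMonoidAlgebra.smul_single, smul_eq_mul, mul_one, AddMonoidAlgebra.single_inj, ha,
    false_and, or_false]

theorem isUnit_iff_exists_eq_smul_T [CommRing R] [IsDomain R] {f : R[T;T⁻¹]} :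
    IsUnit f ↔ ∃ (u : Rˣ) (k : ℤ), f = u • T k := by
  refine ⟨fun hf ↦ ?_, ?_⟩
  · obtain ⟨n, p, hp⟩ := exists_T_pow f
    have hp_unit : IsUnit (algebraMap (Polynomial R) R[T;T⁻¹] p) := by
      rw [algebraMap_eq_toLaurent, hp]
      exact hf.mul (isUnit_T n)
    obtain ⟨d, hd⟩ := (IsLocalization.Away.algebraMap_isUnit_iff Polynomial.X).mp hp_unit
    obtain ⟨i, -, hpi⟩ := (dvd_prime_pow Polynomial.prime_X d).mp hd
    obtain ⟨v, hv⟩ := hpi.symm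
    obtain ⟨c, ⟨u, rfl⟩, hu⟩ := Polynomial.isUnit_iff.mp v.isUnit
    refine ⟨u, i - n, ?_⟩
    calc f = Polynomial.toLaurent p * T (-n) := by
          rw [hp, mul_T_assoc, add_neg_cancel, T_zero, mul_one]
      _ = C (u : R) * T i * T (-n) := by
          rw [← hv, ← hu, map_mul, Polynomial.toLaurent_X_pow, Polynomial.toLaurent_C,
            mul_comm (T _)]
      _ = u • T (i - n) := by rw [mul_T_assoc, Units.smul_def, smul_eq_C_mul, sub_eq_add_neg]
  · rintro ⟨u, k, rfl⟩
    exact (isUnit_T k).smul u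

theorem linearMap_ext_T [Semiring R] {M : Type*} [AddCommMonoid M] [Module R M]
    {φ ψ : R[T;T⁻¹] →ₗ[R] M} (h : ∀ m : ℤ, φ (T m) = ψ (T m)) : φ = ψ :=
  AddMonoidAlgebra.lhom_ext' fun m ↦ LinearMap.ext_ring (h m)

theorem map_T_eq_zpow_smul_T [CommSemiring R] {ω : R[T;T⁻¹] →ₐ[R] R[T;T⁻¹]} {u : Rˣ} {k : ℤ}
    (hω : ω (T 1) = u • T k) (m : ℤ) : ω (T m) = u ^ m • T (k * m) := by
  let monomialHom : Multiplicative ℤ →* R[T;T⁻¹] :=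
    { toFun n := u ^ n.toAdd • T (k * n.toAdd)
      map_one' := by simp
      map_mul' a b := by
        rw [toAdd_mul, zpow_add, mul_add, T_add, smul_mul_smul_comm] }
  have hom_eq : (ω : R[T;T⁻¹] →* R[T;T⁻¹]).comp (AddMonoidAlgebra.of R ℤ) = monomialHom :=
    MonoidHom.ext_mint (by simpa [monomialHom] using hω)
  exact DFunLike.congr_fun hom_eq (Multiplicative.ofAdd m)

theorem exists_map_T_one_eq_smul_T [CommRing R] [IsDomain R] (ω : R[T;T⁻¹] →ₐ[R] R[T;T⁻¹]) :
    ∃ (u : Rˣ) (k : ℤ), ω (T 1) = u • T k :=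
  isUnit_iff_exists_eq_smul_T.mp ((isUnit_T 1).map ω)

end Monomials

section MonomialEndomorphism

variable {R : Type*}

theorem involutive_iff_of_map_T_one [CommSemiring R] [Nontrivial R]
    {ω : R[T;T⁻¹] →ₐ[R] R[T;T⁻¹]} {u : Rˣ} {k : ℤ} (hω : ω (T 1) = u • T k) :
    Function.Involutive ω ↔ k * k = 1 ∧ u ^ (k + 1) = 1 := by
  have map_map_T (m : ℤ) : ω (ω (T m)) = ((u ^ (k + 1)) ^ m : Rˣ) • T (k * k * m) := by
    rw [map_T_eq_zpow_smul_T hω, Units.smul_def, map_smul, ← Units.smul_def,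
      map_T_eq_zpow_smul_T hω, smul_smul, ← zpow_add, ← zpow_mul, mul_assoc]
    ring_nf
  constructor
  · intro hinv
    have fixes_T_one : ((u ^ (k + 1) : Rˣ) : R) • (T (k * k) : R[T;T⁻¹]) = (1 : R) • T 1 := by
      simpa [Units.smul_def] using (map_map_T 1).symm.trans (hinv (T 1))
    rw [smul_T_eq_smul_T_iff (Units.ne_zero _)] at fixes_T_one
    exact fixes_T_one.imp_right Units.val_eq_one.mp
  · rintro ⟨hk, hu⟩
    have comp_eq_id : ω.toLinearMap ∘ₗ ω.toLinearMap = LinearMap.id :=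
      linearMap_ext_T fun m ↦ by simp [map_map_T, hk, hu]
    exact DFunLike.congr_fun comp_eq_id

theorem anticommutator_T [CommRing R]
    {ω : R[T;T⁻¹] →ₐ[R] R[T;T⁻¹]} {u : Rˣ} {k l : ℤ} {δ : R[T;T⁻¹] →ₗ[R] R[T;T⁻¹]}
    (hω : ω (T 1) = u • T k) (hδ : ∀ m : ℤ, δ (T m) = m • (T (m + l - 1) : R[T;T⁻¹])) (m : ℤ) :
    ω (δ (T m)) + δ (ω (T m)) =
      m • u ^ m •
        (((u ^ (l - 1) : Rˣ) : R) • T (k * (m + l - 1)) - (-k : R) • T (k * m + l - 1)) := by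
  have map_δ_T : ω (δ (T m)) = m • u ^ m • ((u ^ (l - 1) : Rˣ) : R) • T (k * (m + l - 1)) := by
    rw [hδ, map_zsmul, map_T_eq_zpow_smul_T hω, add_sub_assoc, zpow_add, mul_smul,
      Units.smul_def (u ^ (l - 1))]
  have δ_map_T : δ (ω (T m)) = m • u ^ m • (k : R) • T (k * m + l - 1) := by
    rw [map_T_eq_zpow_smul_T hω, Units.smul_def, map_smul, ← Units.smul_def, hδ, mul_comm k,
      mul_smul, smul_comm (u ^ m), Int.cast_smul_eq_zsmul]
  rw [map_δ_T, δ_map_T, neg_smul, sub_neg_eq_add, smul_add, smul_add]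

theorem anticommute_iff_of_map_T_one [CommRing R] [Nontrivial R]
    {ω : R[T;T⁻¹] →ₐ[R] R[T;T⁻¹]} {u : Rˣ} {k l : ℤ} {δ : R[T;T⁻¹] →ₗ[R] R[T;T⁻¹]}
    (hω : ω (T 1) = u • T k) (hδ : ∀ m : ℤ, δ (T m) = m • (T (m + l - 1) : R[T;T⁻¹])) :
    (∀ x, ω (δ x) + δ (ω x) = 0) ↔ (k - 1) * (l - 1) = 0 ∧ ((u ^ (l - 1) : Rˣ) : R) = -k := by
  constructor
  · intro hanti
    have at_T_one := (anticommutator_T hω hδ 1).symm.trans (hanti (T 1))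
    rw [one_smul, smul_eq_zero_iff_eq, sub_eq_zero, smul_T_eq_smul_T_iff (Units.ne_zero _)]
      at at_T_one
    exact ⟨by linear_combination at_T_one.1, at_T_one.2⟩
  · rintro ⟨hkl, hu⟩
    have anticommutator_eq_zero : ω.toLinearMap ∘ₗ δ + δ ∘ₗ ω.toLinearMap = 0 :=
      linearMap_ext_T fun m ↦ by
        have exponents_eq : k * (m + l - 1) = k * m + l - 1 := by linear_combination hkl
        simpa [exponents_eq, hu] using anticommutator_T hω hδ m
    exact DFunLike.congr_fun anticommutator_eq_zero

end MonomialEndomorphism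

theorem stmt_13_general {R : Type*} [CommRing R] [IsDomain R] (h2 : (2 : R) ≠ 0) {l : ℤ}
    {ω : R[T;T⁻¹] →ₐ[R] R[T;T⁻¹]} (hω : Function.Involutive ω)
    {δ : R[T;T⁻¹] →ₗ[R] R[T;T⁻¹]}
    (hδ : ∀ m : ℤ, δ (T m) = m • (T (m + l - 1) : R[T;T⁻¹])) :
    (∀ x, ω (δ x) + δ (ω x) = 0) ↔
      (Even l ∧ ∀ m : ℤ, ω (T m) = (-1 : Rˣ) ^ m • (T m : R[T;T⁻¹])) ∨
      (l = 1 ∧ ∃ u : Rˣ, ∀ m : ℤ, ω (T m) = u ^ m • (T (-m) : R[T;T⁻¹])) := by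
  have neg_one_ne_one : (-1 : Rˣ) ≠ 1 := by
    rw [Ne, Units.ext_iff, Units.val_neg, Units.val_one]
    exact fun h ↦ h2 (by linear_combination -h)
  constructor
  · intro hanti
    obtain ⟨u, k, hT⟩ := exists_map_T_one_eq_smul_T ω
    have hpow := map_T_eq_zpow_smul_T hT
    obtain ⟨hkk, hu⟩ := (involutive_iff_of_map_T_one hT).mp hω
    obtain ⟨hkl, hul⟩ := (anticommute_iff_of_map_T_one hT hδ).mp hanti
    rcases Int.eq_one_or_neg_one_of_mul_eq_one hkk with rfl | rfl
    · have inv_eq_self : u⁻¹ = u := inv_eq_of_mul_eq_one_right (by rwa [zpow_add, zpow_one] at hu)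
      rcases (Units.inv_eq_self_iff u).mp inv_eq_self with rfl | rfl
      · exact absurd (Units.ext (by simpa using hul)) neg_one_ne_one.symm
      · have hl : Odd (l - 1) :=
          (neg_one_zpow_eq_neg_one_iff_odd neg_one_ne_one).mp (Units.ext (by simpa using hul))
        exact .inl ⟨by simpa using hl.add_odd odd_one, by simpa using hpow⟩
    · exact .inr ⟨by lia, u, by simpa using hpow⟩
  · rintro (⟨hl, hT⟩ | ⟨rfl, u, hT⟩)
    · refine (anticommute_iff_of_map_T_one (u := -1) (k := 1) (by simpa using hT 1) hδ).mpr ?_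
      simp [(hl.sub_odd odd_one).neg_one_zpow]
    · exact (anticommute_iff_of_map_T_one (k := -1) (by simpa using hT 1) hδ).mpr (by simp)

/-- For char F ≠ 2, an involution `ω` of `A = F[t, t⁻¹]` anticommutes with
the derivation `δ_l` (given by `δ_l(t^m) = m·t^{m+l−1}`) iff either `l` is even and
`ω(t^m) = (−1)^m t^m`, or `l = 1` and `ω(t^m) = λ^m t^{−m}` for some nonzero `λ`. -/
theorem stmt_13 (F : Type*) [Field F] (h2 : (2 : F) ≠ 0) (l : ℤ)
    (ω : LaurentPolynomial F →ₐ[F] LaurentPolynomial F)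
    (hωinv : ∀ x : LaurentPolynomial F, ω (ω x) = x)
    (δ : LaurentPolynomial F →ₗ[F] LaurentPolynomial F)
    (hδleib : ∀ x y : LaurentPolynomial F, δ (x * y) = δ x * y + x * δ y)
    (hδ : ∀ m : ℤ, δ (T m) = m • (T (m + l - 1) : LaurentPolynomial F)) :
    (∀ x : LaurentPolynomial F, ω (δ x) + δ (ω x) = 0) ↔
    ((Even l ∧ ∀ m : ℤ, ω (T m) = ((-1 : F)) ^ m • (T m : LaurentPolynomial F)) ∨
     (l = 1 ∧ ∃ lam : F, lam ≠ 0 ∧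
       ∀ m : ℤ, ω (T m) = lam ^ m • (T (-m) : LaurentPolynomial F))) := by
  rw [stmt_13_general h2 hωinv hδ]
  simp only [Units.smul_def, Units.val_zpow_eq_zpow_val, Units.val_neg, Units.val_one,
    ← Units.exists_iff_ne_zero]
end

section
/- Let F be a field with char F ≠ 2, A = F[t, t⁻¹] the algebra of Laurent polynomials over F, and k ∈ ℤ. Define the trilinear bracket [·,·,·]_{ω,δ_{2k}} on A determined on monomials by [t^l, t^m, t^n]_{ω,δ_{2k}} = ((−1)^l(n−m) + (−1)^m(l−n) + (−1)^n(m−l))·t^{2k+l+m+n−1} for all l, m, n ∈ ℤ. Then this bracket is skew-symmetric and satisfies the fundamental identity; hence (A, [·,·,·]_{ω,δ_{2k}}) is a 3-Lie algebra. -/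
open LaurentPolynomial

/-!
The bracket is a determinant. Let `ω` be the automorphism `t ↦ -t` and `δ` the derivation
`t ^ (2 * k) * d/dt`; then `[x, y, z]` is the determinant with rows `(ω x, ω y, ω z)`, `(x, y, z)`,
`(δ x, δ y, δ z)`. Since `ω` is an involution and `δ` shifts degrees by the odd number
`2 * k - 1`, we have `ω ∘ δ = -δ ∘ ω`. For an involution and a derivation that anticommute, on any
commutative algebra, the fundamental identity is a polynomial identity in the values
of `id`, `ω`, `δ`, `δ ∘ ω` and `δ ∘ δ` at the five arguments.
-/

section DetBracket

variable {R A : Type*} [CommSemiring R] [CommRing A] [Algebra R A]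

/-- The Wronskian `x * δ y - y * δ x` of a derivation, as a bilinear map; these are the minors of
the two lower rows of the determinant `detBracket`. -/
def wronskianBilin (δ : Derivation R A A) : A →ₗ[R] A →ₗ[R] A :=
  (LinearMap.mul R A).compl₂ δ.toLinearMap - ((LinearMap.mul R A).compl₂ δ.toLinearMap).flip

theorem wronskianBilin_apply (δ : Derivation R A A) (x y : A) :
    wronskianBilin δ x y = x * δ y - y * δ x := rfl

/-- The ternary bracket `[x, y, z]_{ω,δ}`, the determinant with rows `ω`, `id`, `δ` evaluated at
`x`, `y`, `z`. It is encoded as a curried trilinear map through its expansion along the first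
row. -/
def detBracket (ω : A →ₐ[R] A) (δ : Derivation R A A) : A →ₗ[R] A →ₗ[R] A →ₗ[R] A :=
  LinearMap.mk₂ R
    (fun x y ↦ ω x • wronskianBilin δ y - ω y • wronskianBilin δ x +
      wronskianBilin δ x y • ω.toLinearMap)
    (fun _ _ _ ↦ by simp only [map_add, LinearMap.add_apply, add_smul, smul_add]; abel)
    (fun c x y ↦ by
      simp only [map_smul, LinearMap.smul_apply, smul_assoc, smul_comm (ω y) c, smul_sub, smul_add])
    (fun _ _ _ ↦ by simp only [map_add, add_smul, smul_add]; abel)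
    (fun c x y ↦ by
      simp only [map_smul, smul_assoc, smul_comm (ω x) c, smul_sub, smul_add])

variable (ω : A →ₐ[R] A) (δ : Derivation R A A)

theorem detBracket_apply (x y z : A) :
    detBracket ω δ x y z =
      ω x * (y * δ z - z * δ y) + ω y * (z * δ x - x * δ z) + ω z * (x * δ y - y * δ x) := by
  simp only [detBracket, wronskianBilin_apply, LinearMap.mk₂_apply, LinearMap.add_apply,
    LinearMap.sub_apply, LinearMap.smul_apply, AlgHom.toLinearMap_apply, smul_eq_mul]
  ring

theorem detBracket_swap_left (x y z : A) : detBracket ω δ y x z = -detBracket ω δ x y z := by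
  simp only [detBracket_apply]
  ring

theorem detBracket_swap_right (x y z : A) : detBracket ω δ x z y = -detBracket ω δ x y z := by
  simp only [detBracket_apply]
  ring

theorem detBracket_swap_outer (x y z : A) : detBracket ω δ z y x = -detBracket ω δ x y z := by
  simp only [detBracket_apply]
  ring

theorem derivation_detBracket (x y z : A) :
    δ (detBracket ω δ x y z) =
      δ (ω x) * (y * δ z - z * δ y) + δ (ω y) * (z * δ x - x * δ z) +
        δ (ω z) * (x * δ y - y * δ x) +
      (ω x * (y * δ (δ z) - z * δ (δ y)) + ω y * (z * δ (δ x) - x * δ (δ z)) +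
        ω z * (x * δ (δ y) - y * δ (δ x))) := by
  simp only [detBracket_apply, map_add, map_sub, Derivation.leibniz, smul_eq_mul]
  ring

variable {ω δ}

theorem map_detBracket (hω : Function.Involutive ω) (hωδ : ∀ x, ω (δ x) = -δ (ω x)) (x y z : A) :
    ω (detBracket ω δ x y z) = -detBracket ω δ (ω x) (ω y) (ω z) := by
  simp only [detBracket_apply, map_add, map_sub, map_mul, hω _, hωδ]
  ring

theorem detBracket_fundamental_identity (hω : Function.Involutive ω)
    (hωδ : ∀ x, ω (δ x) = -δ (ω x)) (x₁ x₂ x₃ y z : A) :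
    detBracket ω δ (detBracket ω δ x₁ x₂ x₃) y z =
      detBracket ω δ (detBracket ω δ x₁ y z) x₂ x₃ +
        detBracket ω δ x₁ (detBracket ω δ x₂ y z) x₃ +
        detBracket ω δ x₁ x₂ (detBracket ω δ x₃ y z) := by
  have expand (u v w p q : A) : detBracket ω δ (detBracket ω δ u v w) p q =
      -detBracket ω δ (ω u) (ω v) (ω w) * (p * δ q - q * δ p) +
        detBracket ω δ u v w * (ω q * δ p - ω p * δ q) +
        δ (detBracket ω δ u v w) * (ω p * q - ω q * p) := by
    rw [detBracket_apply ω δ (detBracket ω δ u v w), map_detBracket hω hωδ]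
    ring
  rw [detBracket_swap_left ω δ (detBracket ω δ x₂ y z),
    detBracket_swap_outer ω δ (detBracket ω δ x₃ y z)]
  simp only [expand, derivation_detBracket]
  simp only [detBracket_apply, hω _]
  ring

end DetBracket

section Monomials

variable {R : Type*} [CommSemiring R] {M : Type*} [AddCommMonoid M] [Module R M]

theorem laurent_linearMap_ext {φ ψ : R[T;T⁻¹] →ₗ[R] M} (h : ∀ n, φ (T n) = ψ (T n)) : φ = ψ :=
  (AddMonoidAlgebra.basis ℤ R).ext fun n ↦ by
    rw [AddMonoidAlgebra.basis_apply]
    exact h n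

theorem laurent_constr_T (v : ℤ → M) (n : ℤ) :
    (AddMonoidAlgebra.basis ℤ R).constr R v (T n) = v n := by
  rw [T, ← AddMonoidAlgebra.basis_apply, Module.Basis.constr_basis]

theorem laurent_trilinearMap_ext
    {f g : R[T;T⁻¹] →ₗ[R] R[T;T⁻¹] →ₗ[R] R[T;T⁻¹] →ₗ[R] M}
    (h : ∀ l m n, f (T l) (T m) (T n) = g (T l) (T m) (T n)) : f = g :=
  laurent_linearMap_ext fun l ↦ laurent_linearMap_ext fun m ↦ laurent_linearMap_ext (h l m)

theorem laurent_leibniz_of_T [Module R[T;T⁻¹] M] [IsScalarTower R R[T;T⁻¹] M]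
    {D : R[T;T⁻¹] →ₗ[R] M}
    (h : ∀ m n, D (T (m + n)) = (T m : R[T;T⁻¹]) • D (T n) + (T n : R[T;T⁻¹]) • D (T m))
    (x y : R[T;T⁻¹]) : D (x * y) = x • D y + y • D x := by
  let smulD : R[T;T⁻¹] →ₗ[R] R[T;T⁻¹] →ₗ[R] M := (Algebra.lsmul R R M).toLinearMap.compl₂ D
  suffices (LinearMap.mul R R[T;T⁻¹]).compr₂ D = smulD + smulD.flip from
    LinearMap.congr_fun₂ this x y
  refine laurent_linearMap_ext fun m ↦ laurent_linearMap_ext fun n ↦ ?_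
  rw [LinearMap.compr₂_apply, LinearMap.mul_apply', ← T_add]
  exact h m n

/-- The algebra endomorphism `t ↦ u * t` of the Laurent polynomials, for a unit `u`. -/
noncomputable def laurentScale (u : Rˣ) : R[T;T⁻¹] →ₐ[R] R[T;T⁻¹] :=
  AddMonoidAlgebra.lift R R[T;T⁻¹] ℤ
    { toFun n := ((u ^ n.toAdd : Rˣ) : R) • T n.toAdd
      map_one' := by simp only [toAdd_one, zpow_zero, Units.val_one, T_zero, one_smul]
      map_mul' m n := by simp only [toAdd_mul, zpow_add, Units.val_mul, T_add, smul_mul_smul_comm] }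

theorem laurentScale_T (u : Rˣ) (n : ℤ) : laurentScale u (T n) = ((u ^ n : Rˣ) : R) • T n :=
  (AddMonoidAlgebra.lift_single _ _ _).trans (one_smul _ _)

theorem laurentScale_involutive {u : Rˣ} (hu : u * u = 1) :
    Function.Involutive (laurentScale u) := by
  suffices (laurentScale u).toLinearMap ∘ₗ (laurentScale u).toLinearMap = LinearMap.id from
    LinearMap.congr_fun this
  refine laurent_linearMap_ext fun n ↦ ?_
  simp only [LinearMap.comp_apply, AlgHom.toLinearMap_apply, LinearMap.id_apply, laurentScale_T,
    map_smul, smul_smul, ← Units.val_mul, ← mul_zpow, hu, one_zpow, Units.val_one, one_smul]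

end Monomials

section LaurentDerivation

variable {R : Type*} [CommRing R]

variable (R) in
/-- The derivation `t ^ (d + 1) * d/dt` of the Laurent polynomials; it is indexed by its degree
`d`, so that it sends `t ^ n` to `n * t ^ (n + d)`. -/
noncomputable def laurentDerivation (d : ℤ) : Derivation R R[T;T⁻¹] R[T;T⁻¹] :=
  Derivation.mk' ((AddMonoidAlgebra.basis ℤ R).constr R fun n ↦ (n : R) • T (n + d)) <|
    laurent_leibniz_of_T fun m n ↦ by
      simp only [laurent_constr_T, smul_eq_mul, mul_smul_comm, ← T_add, Int.cast_add, add_smul]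
      rw [add_comm, add_assoc m n d, add_left_comm m n d]

theorem laurentDerivation_T (d n : ℤ) : laurentDerivation R d (T n) = (n : R) • T (n + d) :=
  laurent_constr_T _ n

theorem laurentScale_laurentDerivation (u : Rˣ) (d : ℤ) (x : R[T;T⁻¹]) :
    laurentScale u (laurentDerivation R d x) =
      ((u ^ d : Rˣ) : R) • laurentDerivation R d (laurentScale u x) := by
  set ω := (laurentScale u).toLinearMap
  set δ := (laurentDerivation R d).toLinearMap
  suffices ω ∘ₗ δ = ((u ^ d : Rˣ) : R) • δ ∘ₗ ω from LinearMap.congr_fun this x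
  refine laurent_linearMap_ext fun n ↦ ?_
  simp only [LinearMap.comp_apply, LinearMap.smul_apply, AlgHom.toLinearMap_apply,
    Derivation.coeFn_coe, ω, δ, laurentScale_T, laurentDerivation_T, map_smul, zpow_add,
    Units.val_mul, smul_smul]
  congr 1
  ring

theorem detBracket_laurent_T (u : Rˣ) (d l m n : ℤ) :
    detBracket (laurentScale u) (laurentDerivation R d) (T l) (T m) (T n) =
      (((u ^ l : Rˣ) : R) * (n - m) + ((u ^ m : Rˣ) : R) * (l - n) + ((u ^ n : Rˣ) : R) * (m - l)) •
        T (l + m + n + d) := by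
  simp only [detBracket_apply, laurentScale_T, laurentDerivation_T, T_add,
    Algebra.smul_def, map_add, map_sub, map_mul]
  ring

end LaurentDerivation

theorem stmt_17_general (R : Type*) [CommRing R] (k : ℤ)
    (f : R[T;T⁻¹] →ₗ[R] R[T;T⁻¹] →ₗ[R] R[T;T⁻¹] →ₗ[R] R[T;T⁻¹])
    (hf : ∀ l m n : ℤ, f (T l) (T m) (T n) =
      ((((-1) ^ l : Rˣ) : R) * ((n : R) - (m : R)) + (((-1) ^ m : Rˣ) : R) * ((l : R) - (n : R)) +
        (((-1) ^ n : Rˣ) : R) * ((m : R) - (l : R))) • (T (2 * k + l + m + n - 1) : R[T;T⁻¹])) :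
    ((∀ x y z : R[T;T⁻¹], f y x z = -f x y z) ∧
     (∀ x y z : R[T;T⁻¹], f x z y = -f x y z) ∧
     (∀ x y z : R[T;T⁻¹], f z y x = -f x y z)) ∧
    (∀ x₁ x₂ x₃ y z : R[T;T⁻¹],
      f (f x₁ x₂ x₃) y z =
        f (f x₁ y z) x₂ x₃ + f x₁ (f x₂ y z) x₃ + f x₁ x₂ (f x₃ y z)) := by
  set ω : R[T;T⁻¹] →ₐ[R] R[T;T⁻¹] := laurentScale (-1)
  set δ := laurentDerivation R (2 * k - 1)
  obtain rfl : f = detBracket ω δ := laurent_trilinearMap_ext fun l m n ↦ by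
    rw [hf, detBracket_laurent_T, show l + m + n + (2 * k - 1) = 2 * k + l + m + n - 1 by ring]
  have hω : Function.Involutive ω := laurentScale_involutive (by rw [neg_mul_neg, one_mul])
  have hωδ (x : R[T;T⁻¹]) : ω (δ x) = -δ (ω x) := by
    have hodd : Odd (2 * k - 1) := ⟨k - 1, by ring⟩
    rw [laurentScale_laurentDerivation, hodd.neg_one_zpow, Units.val_neg, Units.val_one,
      neg_one_smul]
  exact ⟨⟨detBracket_swap_left ω δ, detBracket_swap_right ω δ, detBracket_swap_outer ω δ⟩,
    detBracket_fundamental_identity hω hωδ⟩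

/-- For char F ≠ 2 and `k ∈ ℤ`, the trilinear bracket on `A = F[t,t⁻¹]`
determined on monomials by
`[t^l,t^m,t^n] = ((−1)^l(n−m) + (−1)^m(l−n) + (−1)^n(m−l))·t^{2k+l+m+n−1}`
is skew-symmetric and satisfies the fundamental identity, making `A` a 3-Lie algebra. -/
theorem stmt_17 (F : Type*) [Field F] (h2 : (2 : F) ≠ 0) (k : ℤ)
    (f : LaurentPolynomial F →ₗ[F] LaurentPolynomial F →ₗ[F] LaurentPolynomial F →ₗ[F]
      LaurentPolynomial F)
    (hf : ∀ l m n : ℤ, f (T l) (T m) (T n) =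
      ((-1 : F) ^ l * ((n : F) - (m : F)) + (-1 : F) ^ m * ((l : F) - (n : F)) +
        (-1 : F) ^ n * ((m : F) - (l : F))) •
        (T (2 * k + l + m + n - 1) : LaurentPolynomial F)) :
    ((∀ x y z : LaurentPolynomial F, f y x z = - f x y z) ∧
     (∀ x y z : LaurentPolynomial F, f x z y = - f x y z) ∧
     (∀ x y z : LaurentPolynomial F, f z y x = - f x y z)) ∧
    (∀ x₁ x₂ x₃ y z : LaurentPolynomial F,
      f (f x₁ x₂ x₃) y z =
        f (f x₁ y z) x₂ x₃ + f x₁ (f x₂ y z) x₃ + f x₁ x₂ (f x₃ y z)) :=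
  stmt_17_general F k f fun l m n ↦ by
    simpa only [Units.val_zpow_eq_zpow_val, Units.val_neg, Units.val_one] using hf l m n
end

section
/- Let A = ℂ[t, t⁻¹] be the algebra of Laurent polynomials over the field of complex numbers, equipped with the trilinear bracket [·,·,·]_{ω,δ_0} determined on monomials by [t^l, t^m, t^n]_{ω,δ_0} = ((−1)^l(n−m) + (−1)^m(l−n) + (−1)^n(m−l))·t^{l+m+n−1} for all l, m, n ∈ ℤ. Then (A, [·,·,·]_{ω,δ_0}) is a simple 3-Lie algebra: every ℂ-subspace I ⊆ A with I ≠ 0 and [x,y,z]_{ω,δ_0} ∈ I for all x ∈ I and y, z ∈ A satisfies I = A. -/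
open LaurentPolynomial

/-!
Bracketing with `(t⁰, t)` and with `(t², t⁻¹)` preserves degrees, and a suitable combination of the
two operators scales `t^l` by `8l - 4`. Its eigenvalues being distinct, a nonzero ideal contains
some monomial `t^l`. Bracketing `t^l` with `t^{l+2}` and a monomial of the opposite parity then
produces every `t^k` with `k ≡ l` mod 2, while `[t^l, t^{l+1}, t^{l-1}]` is a nonzero multiple of
`t^{3l-1}`, whose degree has the other parity.
-/

section InvariantSubmodule

-- In the quotient by `p` the images of the `v i` still lie in distinct eigenspaces, and sum to `0`.
lemma mem_of_sum_mem_invtSubmodule {ι R M : Type*} [CommRing R] [IsDomain R] [AddCommGroup M]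
    [Module R M] {p : Submodule R M} [Module.IsTorsionFree R (M ⧸ p)] {φ : Module.End R M}
    (hp : p ∈ φ.invtSubmodule) {μ : ι → R} (hμ : μ.Injective) {s : Finset ι} {v : ι → M}
    (hv : ∀ i ∈ s, φ (v i) = μ i • v i) (hsum : ∑ i ∈ s, v i ∈ p) :
    ∀ i ∈ s, v i ∈ p := by
  let φ' : Module.End R (M ⧸ p) := p.mapQ p φ hp
  have hv' : ∀ i ∈ s, p.mkQ (v i) ∈ φ'.eigenspace (μ i) := fun i hi ↦
    Module.End.mem_eigenspace_iff.2 <| by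
      rw [← map_smul, ← hv i hi]
      rfl
  have hsum' : ∑ i ∈ s, p.mkQ (v i) = 0 := by
    rw [← map_sum]
    exact (Submodule.Quotient.mk_eq_zero p).2 hsum
  have hindep : iSupIndep fun i ↦ φ'.eigenspace (μ i) := φ'.eigenspaces_iSupIndep.comp hμ
  intro i hi
  exact (Submodule.Quotient.mk_eq_zero p).1 <|
    (iSupIndep_iff_finsetSum_eq_zero_imp_eq_zero _).1 hindep s _ hv' hsum' i hi

lemma exists_basis_mem_of_mem_invtSubmodule {ι K V : Type*} [Field K] [AddCommGroup V]
    [Module K V] {p : Submodule K V} {φ : Module.End K V} (hp : p ∈ φ.invtSubmodule)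
    (hp0 : p ≠ ⊥) (b : Module.Basis ι K V) {μ : ι → K} (hμ : μ.Injective)
    (hb : ∀ i, φ (b i) = μ i • b i) : ∃ i, b i ∈ p := by
  obtain ⟨x, hxp, hx0⟩ := p.exists_mem_ne_zero_of_ne_bot hp0
  obtain ⟨i, hi⟩ : (b.repr x).support.Nonempty := by simpa using hx0
  have hsum : ∑ j ∈ (b.repr x).support, b.repr x j • b j ∈ p := by
    rwa [← b.linearCombination_repr x, Finsupp.linearCombination_apply] at hxp
  have hterm : b.repr x i • b i ∈ p :=
    mem_of_sum_mem_invtSubmodule hp hμ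
      (fun j _ ↦ by rw [map_smul, hb, smul_comm]) hsum i hi
  exact ⟨i, (p.smul_mem_iff (Finsupp.mem_support_iff.1 hi)).1 hterm⟩

end InvariantSubmodule

section StructureConstant

variable (K : Type*) [Field K]

/-- The structure constant of the bracket `[·,·,·]_{ω,δ₀}`, that is, the coefficient of
`t^{l+m+n-1}` in `[t^l, t^m, t^n]_{ω,δ₀}`. -/
def bracketCoeff (l m n : ℤ) : K :=
  (-1) ^ l * ((n : K) - m) + (-1) ^ m * ((l : K) - n) + (-1) ^ n * ((m : K) - l)

lemma bracketCoeff_rotate (l m n : ℤ) : bracketCoeff K l m n = bracketCoeff K m n l := by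
  unfold bracketCoeff
  ring

variable {K}

lemma bracketCoeff_of_even_of_odd {l m n : ℤ} (hm : Even (m - l)) (hn : Odd (n - l)) :
    bracketCoeff K l m n = 2 * (-1) ^ l * ((l : K) - m) := by
  have neg_one_ne_zero : (-1 : K) ≠ 0 := neg_ne_zero.2 one_ne_zero
  have sign_m : (-1 : K) ^ m = (-1) ^ l := by
    rw [← sub_add_cancel m l, zpow_add₀ neg_one_ne_zero, hm.neg_one_zpow, one_mul]
  have sign_n : (-1 : K) ^ n = -(-1) ^ l := by
    rw [← sub_add_cancel n l, zpow_add₀ neg_one_ne_zero, hn.neg_one_zpow, neg_one_mul]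
  rw [bracketCoeff, sign_m, sign_n]
  ring

lemma bracketCoeff_ne_zero [CharZero K] {l m n : ℤ} (hm : Even (m - l)) (hn : Odd (n - l))
    (hlm : l ≠ m) : bracketCoeff K l m n ≠ 0 := by
  rw [bracketCoeff_of_even_of_odd hm hn]
  exact mul_ne_zero (mul_ne_zero two_ne_zero (zpow_ne_zero l (neg_ne_zero.2 one_ne_zero)))
    (sub_ne_zero.2 (Int.cast_injective.ne hlm))

end StructureConstant

section Ideal

variable {K : Type*} [Field K] {f : K[T;T⁻¹] →ₗ[K] K[T;T⁻¹] →ₗ[K] K[T;T⁻¹] →ₗ[K] K[T;T⁻¹]}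

variable (f) in
/-- An operator in the span of the maps `x ↦ [x, y, z]` that, in characteristic zero, has the
monomials as eigenvectors with distinct eigenvalues. The weights `3` and `1` are chosen so that the
terms in `(-1)^l` cancel; `x ↦ [x, t⁰, t]` alone does not separate `t^{2j}` from `t^{2j+1}`. -/
noncomputable def separatingOperator : Module.End K K[T;T⁻¹] :=
  (3 : K) • (f.flip (T 0)).flip (T 1) + (f.flip (T 2)).flip (T (-1))

lemma separatingOperator_T
    (hf : ∀ l m n : ℤ, f (T l) (T m) (T n) = bracketCoeff K l m n • T (l + m + n - 1)) (l : ℤ) :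
    separatingOperator f (T l) = (8 * (l : K) - 4) • T l := by
  have degree_zero_one : l + 0 + 1 - 1 = l := by ring
  have degree_two_neg_one : l + 2 + -1 - 1 = l := by ring
  have eigenvalue : 3 * bracketCoeff K l 0 1 + bracketCoeff K l 2 (-1) = 8 * (l : K) - 4 := by
    have sign_two : (-1 : K) ^ (2 : ℤ) = 1 := even_two.neg_one_zpow
    have sign_neg_one : (-1 : K) ^ (-1 : ℤ) = -1 := odd_neg_one.neg_one_zpow
    rw [bracketCoeff, bracketCoeff, zpow_zero, zpow_one, sign_two, sign_neg_one]
    push_cast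
    ring
  simp only [separatingOperator, LinearMap.add_apply, LinearMap.smul_apply, LinearMap.flip_apply,
    hf, degree_zero_one, degree_two_neg_one, smul_smul, ← add_smul, eigenvalue]

variable {I : Submodule K K[T;T⁻¹]} (hI : ∀ x ∈ I, ∀ y z : K[T;T⁻¹], f x y z ∈ I)

include hI

lemma mem_invtSubmodule_separatingOperator : I ∈ (separatingOperator f).invtSubmodule :=
  fun x hx ↦ I.add_mem (I.smul_mem 3 (hI x hx _ _)) (hI x hx _ _)

variable (hf : ∀ l m n : ℤ, f (T l) (T m) (T n) = bracketCoeff K l m n • T (l + m + n - 1))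

include hf

lemma T_mem_of_bracketCoeff_ne_zero {l m n k : ℤ} (hl : T l ∈ I)
    (hcoeff : bracketCoeff K l m n ≠ 0) (hk : l + m + n - 1 = k) : T k ∈ I := by
  have hbracket : bracketCoeff K l m n • T (l + m + n - 1) ∈ I := hf l m n ▸ hI _ hl _ _
  exact hk ▸ (I.smul_mem_iff hcoeff).1 hbracket

variable [CharZero K]

lemma exists_T_mem (hI0 : I ≠ ⊥) : ∃ l : ℤ, T l ∈ I := by
  have eigenvalue_injective : Function.Injective fun l : ℤ ↦ 8 * (l : K) - 4 := fun l m h ↦ by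
    simpa using h
  exact exists_basis_mem_of_mem_invtSubmodule (mem_invtSubmodule_separatingOperator hI) hI0
    (AddMonoidAlgebra.basis ℤ K) eigenvalue_injective (separatingOperator_T hf)

lemma T_mem_of_even_sub {l k : ℤ} (hl : T l ∈ I) (hk : Even (k - l)) : T k ∈ I := by
  have hcoeff : bracketCoeff K l (l + 2) (k - 2 * l - 1) ≠ 0 :=
    bracketCoeff_ne_zero (by grind) (by grind) (by lia)
  exact T_mem_of_bracketCoeff_ne_zero hI hf hl hcoeff (by ring)

lemma T_three_mul_sub_one_mem {l : ℤ} (hl : T l ∈ I) : T (3 * l - 1) ∈ I := by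
  have hcoeff : bracketCoeff K l (l + 1) (l - 1) ≠ 0 := by
    rw [bracketCoeff_rotate]
    exact bracketCoeff_ne_zero (by grind) (by grind) (by lia)
  exact T_mem_of_bracketCoeff_ne_zero hI hf hl hcoeff (by ring)

lemma T_mem_of_T_mem {l : ℤ} (hl : T l ∈ I) (k : ℤ) : T k ∈ I := by
  rcases Int.even_or_odd (k - l) with heven | hodd
  · exact T_mem_of_even_sub hI hf hl heven
  · exact T_mem_of_even_sub hI hf (T_three_mul_sub_one_mem hI hf hl) (by grind)

end Ideal

theorem stmt_18_general {K : Type*} [Field K] [CharZero K]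
    (f : K[T;T⁻¹] →ₗ[K] K[T;T⁻¹] →ₗ[K] K[T;T⁻¹] →ₗ[K] K[T;T⁻¹])
    (hf : ∀ l m n : ℤ, f (T l) (T m) (T n) = bracketCoeff K l m n • T (l + m + n - 1))
    (I : Submodule K K[T;T⁻¹]) (hI0 : I ≠ ⊥) (hI : ∀ x ∈ I, ∀ y z : K[T;T⁻¹], f x y z ∈ I) :
    I = ⊤ := by
  obtain ⟨l, hl⟩ := exists_T_mem hI hf hI0
  rw [eq_top_iff, ← (AddMonoidAlgebra.basis ℤ K).span_eq, Submodule.span_le]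
  rintro _ ⟨k, rfl⟩
  exact T_mem_of_T_mem hI hf hl k

/-- Over `ℂ`, the Laurent polynomial algebra `A = ℂ[t,t⁻¹]` with the
bracket determined on monomials by
`[t^l,t^m,t^n] = ((−1)^l(n−m) + (−1)^m(l−n) + (−1)^n(m−l))·t^{l+m+n−1}`
is a simple 3-Lie algebra: every nonzero subspace closed under left bracketing is all
of `A`. -/
theorem stmt_18
    (f : LaurentPolynomial ℂ →ₗ[ℂ] LaurentPolynomial ℂ →ₗ[ℂ] LaurentPolynomial ℂ →ₗ[ℂ]
      LaurentPolynomial ℂ)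
    (hf : ∀ l m n : ℤ, f (T l) (T m) (T n) =
      ((-1 : ℂ) ^ l * ((n : ℂ) - (m : ℂ)) + (-1 : ℂ) ^ m * ((l : ℂ) - (n : ℂ)) +
        (-1 : ℂ) ^ n * ((m : ℂ) - (l : ℂ))) •
        (T (l + m + n - 1) : LaurentPolynomial ℂ)) :
    ∀ I : Submodule ℂ (LaurentPolynomial ℂ), I ≠ ⊥ →
      (∀ x ∈ I, ∀ y z : LaurentPolynomial ℂ, f x y z ∈ I) → I = ⊤ :=
  stmt_18_general f hf
end
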